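/- Let G be a set equipped with functions deg: G → ℤ and a symmetric function loc: G × G → ℤ. Suppose that for every finite tuple a = (a₁,…,a_l) of elements of G we are given a k-linear subspace Ω^{a} ⊆ Φ^l such that: (Ω0) Ω^{()} = k and Ω^{(a)} = k[z] for every a ∈ G; (Ω1) every α ∈ Ω^{a} satisfies ord_{ij}α ≥ −loc(a_i,a_j) for all 1 ≤ i < j ≤ l; (Ω2) Ω^{a} = σΩ^{σa} for every permutation σ of {1,…,l}, where (σα)(z₁,…,z_l) = α(z_{σ(1)},…,z_{σ(l)}) and σa = (a_{σ(1)},…,a_{σ(l)}); (Ω3) Ω^{a} is closed under the operators Δ = Σ_i ∂_{z_i} and Δ*(2·deg a₁,…,2·deg a_l) = Σ_i (z_i²∂_{z_i} + 2(deg a_i)z_i); (Ω4) for every α ∈ Ω^{a}, in the Laurent expansion α(z₁,…,z_l) = Σ_{n≥n₀} z₁^{−n−1}·α_n(z₂,…,z_l) of α at z₁ = ∞, every coefficient α_n lies in Ω^{(a₂,…,a_l)}. Then the following also holds: for every 1 ≤ k ≤ l and every α ∈ Ω^{(a₁,…,a_l)}, the expansion of α(z₁+z,…,z_k+z,z_{k+1},…,z_l)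 at z = ∞ has the form Σ_{n≥n₀} z^{−n−1}·Σ_i α'_{ni}(z₁,…,z_k)·α''_{ni}(z_{k+1},…,z_l), with finitely many terms i for each n, where α'_{ni} ∈ Ω^{(a₁,…,a_k)} and α''_{ni} ∈ Ω^{(a_{k+1},…,a_l)}. -/

import Mathlib

open scoped Classical

noncomputable section

namespace Griess

open MvPolynomial

variable {k : Type} [Field k]

/-- The field `k(z₁,…,z_l)` of rational functions over `k` in `l` variables. -/
abbrev RF (k : Type) [Field k] (l : ℕ) : Type := FractionRing (MvPolynomial (Fin l) k)

/-- The variable `zᵢ` as an element of the rational function field. -/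
def zv {k : Type} [Field k] {l : ℕ} (i : Fin l) : RF k l :=
  algebraMap (MvPolynomial (Fin l) k) (RF k l) (MvPolynomial.X i)

/-- The space `Φ^l` of rational functions of the form
`p(z₁,…,z_l) · ∏_{i<j} (zᵢ - z_j)^{k_{ij}}`. -/
def Phi (k : Type) [Field k] (l : ℕ) : Set (RF k l) :=
  { x | ∃ (p : MvPolynomial (Fin l) k) (e : Fin l → Fin l → ℤ),
      x = algebraMap (MvPolynomial (Fin l) k) (RF k l) p *
        ∏ i : Fin l, ∏ j : Fin l, (if i < j then (zv i - zv j) ^ e i j else 1) }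

/-- `D` is the family of partial derivative operators `∂_{z₁},…,∂_{z_l}`:
a family of `k`-linear derivations with `D i (z j) = δ_{ij}`. -/
def IsPartialDeriv {l : ℕ} (D : Fin l → Derivation k (RF k l) (RF k l)) : Prop :=
  ∀ i j : Fin l, D i (zv j) = if j = i then 1 else 0

/-- The operator `Δ = Σᵢ ∂_{zᵢ}`. -/
def Delta {l : ℕ} (D : Fin l → Derivation k (RF k l) (RF k l)) (α : RF k l) : RF k l :=
  ∑ i, D i α

/-- The operator `Δ*(n₁,…,n_l) = Σᵢ (zᵢ² ∂_{zᵢ} + nᵢ zᵢ)`. -/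
def DeltaStar {l : ℕ} (D : Fin l → Derivation k (RF k l) (RF k l)) (n : Fin l → ℤ)
    (α : RF k l) : RF k l :=
  ∑ i, ((zv i) ^ 2 * D i α + (n i : RF k l) * zv i * α)

section Subst

variable {l : ℕ}

/-- The embedding of polynomials in `z₁,…,z_l` into rational functions of
`z₁,…,z_l` and one extra variable `t` (`= RatFunc.X`). -/
def toRatFuncHom (k : Type) [Field k] (l : ℕ) :
    Polynomial (MvPolynomial (Fin l) k) →+* RatFunc (RF k l) :=
  (algebraMap (Polynomial (RF k l)) (RatFunc (RF k l))).comp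
    (Polynomial.mapRingHom (algebraMap (MvPolynomial (Fin l) k) (RF k l)))

lemma toRatFuncHom_injective : Function.Injective (toRatFuncHom k l) := by
  have h1 : Function.Injective (algebraMap (Polynomial (RF k l)) (RatFunc (RF k l))) :=
    IsFractionRing.injective _ _
  have h2 : Function.Injective
      (Polynomial.mapRingHom (algebraMap (MvPolynomial (Fin l) k) (RF k l))) :=
    Polynomial.map_injective _ (IsFractionRing.injective _ _)
  exact fun a b hab => h2 (h1 hab)

/-- Polynomial level substitution `z_j ↦ t·z_j` for `j ∈ J`. -/
def scaleAux (k : Type) [Field k] (l : ℕ) (J : Finset (Fin l)) :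
    MvPolynomial (Fin l) k →+* Polynomial (MvPolynomial (Fin l) k) :=
  (MvPolynomial.aeval (R := k) fun i =>
    if i ∈ J then Polynomial.X * Polynomial.C (MvPolynomial.X i)
    else Polynomial.C (MvPolynomial.X i)).toRingHom

lemma scaleAux_injective (J : Finset (Fin l)) :
    Function.Injective (scaleAux k l J) := by
  have h : (Polynomial.evalRingHom (1 : MvPolynomial (Fin l) k)).comp (scaleAux k l J)
      = RingHom.id _ := by
    apply MvPolynomial.ringHom_ext
    · intro r; simp [scaleAux]
    · intro i; by_cases hi : i ∈ J <;> simp [scaleAux, hi]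
  intro p q hpq
  have hp := DFunLike.congr_fun h p
  have hq := DFunLike.congr_fun h q
  simp only [RingHom.comp_apply, RingHom.id_apply] at hp hq
  rw [← hp, ← hq, hpq]

/-- The substitution `z_j ↦ t·z_j` (for `j ∈ J`), as a map from rational functions
in `z₁,…,z_l` to rational functions in `z₁,…,z_l` and `t`.  Reading off the
coefficients of the Laurent expansion in `t` at `t = 0` of `scaleJ J α` yields the
decomposition of `α` into its homogeneous components with respect to the total degree
in the variables `{z_j : j ∈ J}`, i.e. the expansion of `α` in the domain where the
variables of `J` are much smaller than the remaining variables. -/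
def scaleJ (J : Finset (Fin l)) : RF k l →+* RatFunc (RF k l) :=
  IsFractionRing.lift (g := (toRatFuncHom k l).comp (scaleAux k l J))
    (fun a b hab => scaleAux_injective J (toRatFuncHom_injective hab))

/-- Polynomial level substitution `z_i ↦ z_j + t`. -/
def subPairAux (k : Type) [Field k] (l : ℕ) (i j : Fin l) :
    MvPolynomial (Fin l) k →+* Polynomial (MvPolynomial (Fin l) k) :=
  (MvPolynomial.aeval (R := k) fun s =>
    if s = i then Polynomial.X + Polynomial.C (MvPolynomial.X j)
    else Polynomial.C (MvPolynomial.X s)).toRingHom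

lemma subPairAux_injective (i j : Fin l) :
    Function.Injective (subPairAux k l i j) := by
  have h : (Polynomial.evalRingHom (MvPolynomial.X i - MvPolynomial.X j)).comp
      (subPairAux k l i j) = RingHom.id _ := by
    apply MvPolynomial.ringHom_ext
    · intro r; simp [subPairAux]
    · intro s; by_cases hs : s = i <;> simp [subPairAux, hs]
  intro p q hpq
  have hp := DFunLike.congr_fun h p
  have hq := DFunLike.congr_fun h q
  simp only [RingHom.comp_apply, RingHom.id_apply] at hp hq
  rw [← hp, ← hq, hpq]

/-- The substitution `z_i ↦ z_j + t`, as a map from rational functions in `z₁,…,z_l`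
to rational functions in the variables `z₁,…,z_l` and `t`.  Reading off the Laurent
coefficients in `t` at `t = 0` yields the expansion of a rational function in powers
of `z_i - z_j`, with coefficients not involving `z_i`. -/
def subPair (i j : Fin l) : RF k l →+* RatFunc (RF k l) :=
  IsFractionRing.lift (g := (toRatFuncHom k l).comp (subPairAux k l i j))
    (fun a b hab => subPairAux_injective i j (toRatFuncHom_injective hab))

end Subst

/-- The coefficient of `tᵐ` in the Laurent expansion at `t = 0` of a rational
function of `t`. -/
def lcoeff {L : Type} [Field L] (m : ℤ) (f : RatFunc L) : L :=
  (f : LaurentSeries L).coeff m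

/-- The component `(α)_n` of `α` of degree `n` with respect to the partition
`{1,…,l} = Jᶜ ⊔ J` and the weights `d`:  the part of the expansion of `α` in the
domain where the variables of `J` are much smaller than those of `Jᶜ` whose total
degree in the variables `{z_j : j ∈ J}` equals `n - Σ_{j∈J} d_j`. -/
def component {l : ℕ} (J : Finset (Fin l)) (d : Fin l → ℤ) (n : ℤ) (α : RF k l) :
    RF k l :=
  lcoeff (n - ∑ j ∈ J, d j) (scaleJ J α)

/-- `α` is homogeneous of total degree `d` in the variables `{z_i : i ∈ S}`:
substituting `z_i ↦ t·z_i` for `i ∈ S` multiplies `α` by `t^d`. -/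
def IsHomogeneousOn {l : ℕ} (S : Finset (Fin l)) (d : ℤ) (α : RF k l) : Prop :=
  scaleJ S α = RatFunc.X ^ d * RatFunc.C α

/-- `ρ^{(m)}_{ij} α`: the coefficient of `(z_i - z_j)^m` in the expansion of `α`
in powers of `z_i - z_j` (the coefficients do not involve `z_i`). -/
def rho {l : ℕ} (i j : Fin l) (m : ℤ) (α : RF k l) : RF k l :=
  lcoeff m (subPair i j α)

/-- `α` is a rational function of the variables `{z_i : i ∈ S}` only. -/
def dependsOnlyOn {l : ℕ} (S : Finset (Fin l)) (α : RF k l) : Prop :=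
  α ∈ Subfield.closure (Set.range (algebraMap k (RF k l)) ∪ {x | ∃ i ∈ S, x = zv i})

/-- `α` is an admissible function of the variables `{z_i : i ∈ S}` (the space
`R^{|S|}`):  `α ∈ Φ` is a rational function of the variables of `S` only, it is
`(4,…,4)`-regular and homogeneous of degree `-2|S|` in these variables, and all its
components of negative degree, as well as those of degree `1`, vanish (with respect
to every partition of `S` and all weights equal to `2`). -/
def Admissible {l : ℕ} (D : Fin l → Derivation k (RF k l) (RF k l)) (S : Finset (Fin l))
    (α : RF k l) : Prop :=
  α ∈ Phi k l ∧ dependsOnlyOn S α ∧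
    (∑ i ∈ S, ((zv i) ^ 2 * D i α + 4 * zv i * α)) = 0 ∧
    IsHomogeneousOn S (-(2 * (S.card : ℤ))) α ∧
    ∀ J ⊆ S, ∀ n : ℤ, (n < 0 ∨ n = 1) → component J (fun _ => 2) n α = 0

/-- `α` is an indecomposable admissible function of the variables `{z_i : i ∈ S}`
(the space `R₀^{|S|}`): admissible, and all the components `(α)₀` with respect to
partitions of `S` into two nonempty parts vanish. -/
def AdmissibleInd {l : ℕ} (D : Fin l → Derivation k (RF k l) (RF k l))
    (S : Finset (Fin l)) (α : RF k l) : Prop :=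
  Admissible D S α ∧
    ∀ J ⊆ S, J ≠ ∅ → J ≠ S → component J (fun _ => 2) 0 α = 0

section Shift

variable {l : ℕ}

/-- Polynomial level substitution `z_s ↦ z_s - z_t` for `s ∈ S`. -/
def shiftAuxP (k : Type) [Field k] (l : ℕ) (S : Finset (Fin l)) (t : Fin l) :
    MvPolynomial (Fin l) k →+* MvPolynomial (Fin l) k :=
  (MvPolynomial.aeval (R := k) fun s =>
    if s ∈ S then MvPolynomial.X s - MvPolynomial.X t else MvPolynomial.X s).toRingHom

lemma shiftAuxP_injective (S : Finset (Fin l)) (t : Fin l) (ht : t ∉ S) :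
    Function.Injective (shiftAuxP k l S t) := by
  have h : ((MvPolynomial.aeval (R := k) fun s =>
      if s ∈ S then MvPolynomial.X s + MvPolynomial.X t
      else MvPolynomial.X s).toRingHom).comp (shiftAuxP k l S t) = RingHom.id _ := by
    apply MvPolynomial.ringHom_ext
    · intro r; simp [shiftAuxP]
    · intro s
      by_cases hs : s ∈ S
      · have hst : s ≠ t := fun hst => ht (hst ▸ hs)
        simp [shiftAuxP, hs, ht]
      · simp [shiftAuxP, hs]
  intro p q hpq
  have hp := DFunLike.congr_fun h p
  have hq := DFunLike.congr_fun h q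
  simp only [RingHom.comp_apply, RingHom.id_apply] at hp hq
  rw [← hp, ← hq, hpq]

/-- The shift operator substituting `z_s - z_t` for `z_s`, for all `s ∈ S`. -/
def shiftT (S : Finset (Fin l)) (t : Fin l) (ht : t ∉ S) : RF k l →+* RF k l :=
  IsFractionRing.lift
    (g := (algebraMap (MvPolynomial (Fin l) k) (RF k l)).comp (shiftAuxP k l S t))
    (fun a b hab =>
      shiftAuxP_injective S t ht (IsFractionRing.injective _ _ hab))

/-- The operator `ℰ = Σ_{s ∈ S} (-z_s⁻¹ ∂_{z_s} + 2 z_s⁻²)`. -/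
def curlyE {l : ℕ} (D : Fin l → Derivation k (RF k l) (RF k l)) (S : Finset (Fin l))
    (β : RF k l) : RF k l :=
  ∑ s ∈ S, (-((zv s)⁻¹ * D s β) + 2 * (zv s) ^ (-2 : ℤ) * β)

end Shift

end Griess

namespace Griess

set_option synthInstance.maxHeartbeats 1000000
set_option maxHeartbeats 2000000

/-- The embedding `k(z_{f(1)},…,z_{f(m)}) ⊆ k(z₁,…,z_l)` induced by an injection
`f : Fin m → Fin l` of variable indices. -/
def embMap {k : Type} [Field k] {m l : ℕ} (f : Fin m → Fin l)
    (hf : Function.Injective f) : RF k m →+* RF k l :=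
  IsFractionRing.lift
    (g := (algebraMap (MvPolynomial (Fin l) k) (RF k l)).comp
      (MvPolynomial.rename f).toRingHom)
    (by
      intro a b hab
      simp only [RingHom.comp_apply] at hab
      exact MvPolynomial.rename_injective f hf (IsFractionRing.injective _ _ hab))

/-- The action of a permutation `σ` on rational functions:
`(σα)(z₁,…,z_l) = α(z_{σ(1)},…,z_{σ(l)})`, i.e. the substitution `z_i ↦ z_{σ(i)}`
applied to the `i`-th variable slot of `α`. -/
def permHom {k : Type} [Field k] {l : ℕ} (σ : Equiv.Perm (Fin l)) :
    RF k l →+* RF k l :=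
  embMap σ σ.injective



section AllParts
open MvPolynomial
set_option synthInstance.maxHeartbeats 1000000
set_option maxHeartbeats 2000000
set_option linter.all false

section PartOne


variable {k : Type} [Field k]

theorem rf_hom_ext {l : ℕ} {R : Type} [Ring R] [IsDomain R] {f g : RF k l →+* R}
    (hz : ∀ i, f (zv i) = g (zv i))
    (hc : ∀ c : k, f (algebraMap k (RF k l) c) = g (algebraMap k (RF k l) c)) : f = g := by
  apply IsLocalization.ringHom_ext (nonZeroDivisors (MvPolynomial (Fin l) k))
  apply MvPolynomial.ringHom_ext
  · intro r
    have := hc r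
    rw [IsScalarTower.algebraMap_apply k (MvPolynomial (Fin l) k) (RF k l)] at this
    exact this
  · intro i
    exact hz i

theorem embMap_zv {m l : ℕ} (f : Fin m → Fin l) (hf : Function.Injective f) (i : Fin m) :
    embMap (k := k) f hf (zv i) = zv (f i) := by
  simp [embMap, zv, IsFractionRing.lift_algebraMap]

theorem embMap_c {m l : ℕ} (f : Fin m → Fin l) (hf : Function.Injective f) (c : k) :
    embMap (k := k) f hf (algebraMap k _ c) = algebraMap k _ c := by
  rw [IsScalarTower.algebraMap_apply k (MvPolynomial (Fin m) k) (RF k m),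
    IsScalarTower.algebraMap_apply k (MvPolynomial (Fin l) k) (RF k l)]
  simp [embMap, IsFractionRing.lift_algebraMap]

theorem embMap_poly {m l : ℕ} (f : Fin m → Fin l) (hf : Function.Injective f)
    (p : MvPolynomial (Fin m) k) :
    embMap (k := k) f hf (algebraMap _ _ p) = algebraMap _ _ (rename f p) := by
  simp [embMap, IsFractionRing.lift_algebraMap]

theorem embMap_comp {m l n : ℕ} (f : Fin m → Fin l) (hf : Function.Injective f)
    (g : Fin l → Fin n) (hg : Function.Injective g) (h : Fin m → Fin n)
    (hh : Function.Injective h) (e : ∀ i, g (f i) = h i) (x : RF k m) :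
    embMap g hg (embMap f hf x) = embMap h hh x := by
  have : (embMap (k := k) g hg).comp (embMap f hf) = embMap h hh := by
    apply rf_hom_ext
    · intro i; simp [embMap_zv, e]
    · intro c; simp [embMap_c]
  exact DFunLike.congr_fun this x

/-- polynomials in one extra variable `T`, with `T = X⁻¹` -/
def toL (k : Type) [Field k] (l : ℕ) :
    Polynomial (MvPolynomial (Fin l) k) →+* LaurentSeries (RF k l) :=
  Polynomial.eval₂RingHom
    ((HahnSeries.C : RF k l →+* LaurentSeries (RF k l)).comp (algebraMap _ _))
    (HahnSeries.single (-1) 1)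

theorem toL_coeff {l : ℕ} (P : Polynomial (MvPolynomial (Fin l) k)) (n : ℕ) :
    (toL k l P).coeff (-(n : ℤ)) = algebraMap _ _ (P.coeff n) := by
  induction P using Polynomial.induction_on' with
  | add p q hp hq => simp [hp, hq]
  | monomial m a =>
    simp only [toL, Polynomial.coe_eval₂RingHom, Polynomial.eval₂_monomial, RingHom.comp_apply,
      HahnSeries.single_pow, one_pow, HahnSeries.C_apply, HahnSeries.single_mul_single,
      Polynomial.coeff_monomial]
    by_cases h : m = n
    · subst h; simp
    · rw [if_neg h, HahnSeries.coeff_single_of_ne]; · simp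
      simp; omega

theorem toL_injective (l : ℕ) : Function.Injective (toL k l) := by
  intro P Q h
  ext1 n
  apply IsFractionRing.injective (MvPolynomial (Fin l) k) (RF k l)
  rw [← toL_coeff, ← toL_coeff, h]

/-- expansion at `z₁ = ∞` -/
def EE (k : Type) [Field k] (l : ℕ) : RF k (l + 1) →+* LaurentSeries (RF k l) :=
  IsFractionRing.lift (g := (toL k l).comp (finSuccEquiv k l).toRingEquiv.toRingHom)
    (fun a b hab => (finSuccEquiv k l).injective (toL_injective l hab))

theorem EE_zero (l : ℕ) : EE k l (zv 0) = HahnSeries.single (-1) 1 := by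
  simp only [EE, zv, IsFractionRing.lift_algebraMap]
  simp [finSuccEquiv_X_zero, toL]

theorem EE_succ (l : ℕ) (s : Fin l) : EE k l (zv s.succ) = HahnSeries.C (zv s) := by
  simp only [EE, zv, IsFractionRing.lift_algebraMap]
  simp [finSuccEquiv_X_succ, toL]

theorem EE_c (l : ℕ) (c : k) : EE k l (algebraMap k _ c) = HahnSeries.C (algebraMap k _ c) := by
  rw [IsScalarTower.algebraMap_apply k (MvPolynomial (Fin (l+1)) k) (RF k (l+1)),
    IsScalarTower.algebraMap_apply k (MvPolynomial (Fin l) k) (RF k l)]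
  simp only [EE, IsFractionRing.lift_algebraMap]
  simp [toL, finSuccEquiv_apply]

theorem EE_emb (l : ℕ) (q : RF k l) :
    EE k l (embMap Fin.succ (Fin.succ_injective l) q) = HahnSeries.C q := by
  have : (EE k l).comp (embMap Fin.succ (Fin.succ_injective l)) = HahnSeries.C := by
    apply rf_hom_ext
    · intro i; simp [embMap_zv, EE_succ]
    · intro c; simp [embMap_c, EE_c]
  exact DFunLike.congr_fun this q

/-- the substitution `z'' ↦ z'' - X⁻¹` -/
def S2 (k : Type) [Field k] (l K : ℕ) : RF k l →+* LaurentSeries (RF k l) :=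
  IsFractionRing.lift (g := (toL k l).comp
    (MvPolynomial.aeval (R := k) fun s : Fin l =>
      if (s : ℕ) < K then Polynomial.C (MvPolynomial.X s)
      else Polynomial.C (MvPolynomial.X s) - Polynomial.X).toRingHom)
    (by
      have h : (Polynomial.evalRingHom (0 : MvPolynomial (Fin l) k)).comp
          (MvPolynomial.aeval (R := k) fun s : Fin l =>
      if (s : ℕ) < K then Polynomial.C (MvPolynomial.X s)
      else Polynomial.C (MvPolynomial.X s) - Polynomial.X).toRingHom = RingHom.id _ := by
        apply MvPolynomial.ringHom_ext
        · intro r; simp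
        · intro i; by_cases hi : (i : ℕ) < K <;> simp [hi]
      intro p q hpq
      have hp := DFunLike.congr_fun h p
      have hq := DFunLike.congr_fun h q
      simp only [RingHom.comp_apply, RingHom.id_apply] at hp hq hpq
      rw [← hp, ← hq, toL_injective l hpq])

theorem S2_zv (l K : ℕ) (s : Fin l) : S2 k l K (zv s) =
    if (s : ℕ) < K then HahnSeries.C (zv s)
    else HahnSeries.C (zv s) - HahnSeries.single (-1) 1 := by
  simp only [S2, zv, IsFractionRing.lift_algebraMap]
  by_cases hi : (s : ℕ) < K <;> simp [hi, toL]

theorem S2_c (l K : ℕ) (c : k) : S2 k l K (algebraMap k _ c) = HahnSeries.C (algebraMap k _ c) := by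
  rw [IsScalarTower.algebraMap_apply k (MvPolynomial (Fin l) k) (RF k l)]
  simp only [S2, IsFractionRing.lift_algebraMap]
  simp [toL]

/-- coefficientwise application of a ring hom -/
def mapL {A B : Type} [Field A] [Field B] (f : A →+* B) :
    LaurentSeries A →+* LaurentSeries B where
  toFun x := HahnSeries.map x f
  map_one' := by
    ext n; simp [HahnSeries.coeff_one]
  map_zero' := by ext; simp
  map_add' x y := by ext; simp
  map_mul' x y := by
    exact HahnSeries.map_mul (f : A →ₙ+* B)

theorem mapL_coeff {A B : Type} [Field A] [Field B] (f : A →+* B) (x : LaurentSeries A) (n : ℤ) :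
    (mapL f x).coeff n = f (x.coeff n) := rfl

attribute [local instance] RatFunc.liftAlgebra

/-- the coercion as a ring hom -/
def coeL (F : Type) [Field F] : RatFunc F →+* LaurentSeries F :=
  algebraMap (RatFunc F) (LaurentSeries F)

theorem coeL_apply {F : Type} [Field F] (f : RatFunc F) : coeL F f = (f : LaurentSeries F) := rfl

theorem coeL_X {F : Type} [Field F] : coeL F RatFunc.X = HahnSeries.single 1 1 := RatFunc.coe_X

theorem coeL_Xinv {F : Type} [Field F] :
    coeL F RatFunc.X⁻¹ = HahnSeries.single (-1) 1 := by
  rw [map_inv₀, coeL_X]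
  simp

theorem coeL_C {F : Type} [Field F] (c : F) : coeL F (RatFunc.C c) = HahnSeries.C c := by
  rw [coeL_apply, ← RatFunc.algebraMap_C, ← IsScalarTower.algebraMap_apply]; simp

theorem E_eq (l : ℕ) (E : RF k (l + 1) →+* RatFunc (RF k (l + 1)))
    (hE0 : E (zv (0 : Fin (l + 1))) = (RatFunc.X : RatFunc (RF k (l + 1)))⁻¹)
    (hE1 : ∀ (s : Fin l), E (zv s.succ) = RatFunc.C (zv (k := k) s.succ))
    (hEc : ∀ (c : k),
      E (algebraMap k (RF k (l + 1)) c) = RatFunc.C (algebraMap k (RF k (l + 1)) c))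
    (α : RF k (l + 1)) (n : ℤ) :
    lcoeff n (E α) = embMap Fin.succ (Fin.succ_injective l) ((EE k l α).coeff n) := by
  have : (coeL _).comp E = (mapL (embMap Fin.succ (Fin.succ_injective l))).comp (EE k l) := by
    apply rf_hom_ext
    · intro i
      refine Fin.cases ?_ (fun s => ?_) i
      · simp only [RingHom.comp_apply, hE0, coeL_Xinv, EE_zero]
        ext m; rw [mapL_coeff, HahnSeries.coeff_single, HahnSeries.coeff_single]
        split_ifs <;> simp
      · simp only [RingHom.comp_apply, hE1, coeL_C, EE_succ]
        ext m; rw [mapL_coeff, HahnSeries.C_apply, HahnSeries.C_apply,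
          HahnSeries.coeff_single, HahnSeries.coeff_single]
        split_ifs <;> simp [embMap_zv]
    · intro c
      simp only [RingHom.comp_apply, hEc, coeL_C, EE_c]
      ext m; rw [mapL_coeff, HahnSeries.C_apply, HahnSeries.C_apply,
          HahnSeries.coeff_single, HahnSeries.coeff_single]
      split_ifs <;> simp [embMap_c]
  have h2 := DFunLike.congr_fun this α
  simp only [RingHom.comp_apply] at h2
  unfold lcoeff
  rw [← coeL_apply, h2, mapL_coeff]

end PartOne


section PartTwo

variable {k : Type} [Field k]

def xv (k : Type) [Field k] (r : ℕ) {m : ℕ} (i : Fin m) : RF k (r + m) :=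
  zv (Fin.castLE (Nat.le_add_left m r) i)

def ey (k : Type) [Field k] (r m : ℕ) : RF k r →+* RF k (r + m) :=
  embMap (fun s => Fin.addNat s m) (fun s t h => by
    have := congrArg Fin.val h
    simp at this; exact Fin.ext this)

theorem ey_zero (r : ℕ) (q : RF k r) : ey k r 0 q = q := by
  have : ey k r 0 = RingHom.id (RF k r) := by
    apply rf_hom_ext
    · intro i; exact embMap_zv _ _ _
    · intro c; exact embMap_c _ _ _
  exact DFunLike.congr_fun this q

theorem ey_succ (r m : ℕ) (q : RF k r) :
    ey k r (m + 1) q = embMap (k := k) Fin.succ (Fin.succ_injective (r + m)) (ey k r m q) := by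
  symm
  exact embMap_comp _ _ _ _ _ _ (fun i => rfl) q

theorem EE_ey (r m : ℕ) (q : RF k r) :
    EE k (r + m) (ey k r (m + 1) q) = HahnSeries.C (ey k r m q) := by
  rw [ey_succ]; exact EE_emb _ _

theorem EE_xv_zero (r m : ℕ) :
    EE k (r + m) (xv k r (0 : Fin (m + 1))) = HahnSeries.single (-1) 1 := EE_zero _

theorem EE_xv_succ (r m : ℕ) (i : Fin m) :
    EE k (r + m) (xv k r i.succ) = HahnSeries.C (xv k r i) := by
  have h : (Fin.castLE (Nat.le_add_left (m + 1) r) i.succ) =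
      (Fin.castLE (Nat.le_add_left m r) i).succ := Fin.ext rfl
  have h2 : xv k r i.succ = zv (k := k) (Fin.castLE (Nat.le_add_left m r) i).succ :=
    congrArg (zv (k := k)) h
  rw [h2]
  exact EE_succ (r + m) _

/-- degree filtration for the iterated expansion -/
def Bd (k : Type) [Field k] (r : ℕ) : (m : ℕ) → ℤ → RF k (r + m) → Prop
  | 0, B, g => 0 < B → g = 0
  | m + 1, B, g => ∀ n : ℤ, Bd k r m (B - n) ((EE k (r + m) g).coeff n)

theorem Bd_zero {r : ℕ} : ∀ {m : ℕ} (B : ℤ), Bd k r m B 0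
  | 0, B => fun _ => rfl
  | m + 1, B => fun n => by
    rw [map_zero, HahnSeries.coeff_zero]; exact Bd_zero _

theorem Bd_add {r : ℕ} : ∀ {m : ℕ} {B : ℤ} {f g : RF k (r + m)}, Bd k r m B f → Bd k r m B g →
    Bd k r m B (f + g)
  | 0, B, f, g, hf, hg => fun h => by rw [hf h, hg h]; exact add_zero _
  | m + 1, B, f, g, hf, hg => fun n => by
    rw [map_add, HahnSeries.coeff_add]; exact Bd_add (hf n) (hg n)

theorem Bd_neg {r : ℕ} : ∀ {m : ℕ} {B : ℤ} {f : RF k (r + m)}, Bd k r m B f →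
    Bd k r m B (-f)
  | 0, B, f, hf => fun h => by rw [hf h, neg_zero]
  | m + 1, B, f, hf => fun n => by
    rw [map_neg, HahnSeries.coeff_neg]; exact Bd_neg (hf n)

theorem Bd_mono {r : ℕ} : ∀ {m : ℕ} {B B' : ℤ} {f : RF k (r + m)}, B' ≤ B → Bd k r m B f →
    Bd k r m B' f
  | 0, B, B', f, hB, hf => fun h => hf (by omega)
  | m + 1, B, B', f, hB, hf => fun n => Bd_mono (by omega) (hf n)

theorem Bd_sum {r m : ℕ} {B : ℤ} {ι : Type} (s : Finset ι) (f : ι → RF k (r + m))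
    (h : ∀ i ∈ s, Bd k r m B (f i)) : Bd k r m B (∑ i ∈ s, f i) := by
  induction s using Finset.induction_on with
  | empty => simpa using Bd_zero B
  | insert a s ha ih =>
    rw [Finset.sum_insert ha]
    exact Bd_add (h a (by simp)) (ih (fun i hi => h i (by simp [hi])))

theorem Bd_mul {r : ℕ} : ∀ {m : ℕ} {B B' : ℤ} {f g : RF k (r + m)}, Bd k r m B f →
    Bd k r m B' g → Bd k r m (B + B') (f * g)
  | 0, B, B', f, g, hf, hg => fun h => by
    by_cases h1 : 0 < B
    · rw [hf h1, zero_mul]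
    · rw [hg (by omega), mul_zero]
  | m + 1, B, B', f, g, hf, hg => fun n => by
    rw [map_mul, HahnSeries.coeff_mul]
    apply Bd_sum
    intro ij hij
    have h := (Finset.mem_antidiagonal.1 hij).2.2
    exact Bd_mono (by omega) (Bd_mul (hf ij.1) (hg ij.2))

theorem Bd_ey {r : ℕ} : ∀ {m : ℕ} (q : RF k r), Bd k r m 0 (ey k r m q)
  | 0, q => fun h => absurd h (lt_irrefl _)
  | m + 1, q => fun n => by
    rw [EE_ey, HahnSeries.C_apply, HahnSeries.coeff_single]
    split_ifs with h
    · subst h; exact Bd_ey q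
    · exact Bd_zero _

theorem Bd_one {r m : ℕ} : Bd k r m 0 1 := by
  have := Bd_ey (k := k) (r := r) (m := m) 1
  rwa [map_one] at this

theorem Bd_xv {r : ℕ} : ∀ {m : ℕ} (i : Fin m), Bd k r m (-1) (xv k r i)
  | m + 1, i => fun n => by
    induction i using Fin.cases with
    | zero =>
      rw [EE_xv_zero, HahnSeries.coeff_single]
      split_ifs with h
      · subst h; exact Bd_one
      · exact Bd_zero _
    | succ i =>
      rw [EE_xv_succ, HahnSeries.C_apply, HahnSeries.coeff_single]
      split_ifs with h
      · subst h; exact Bd_xv i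
      · exact Bd_zero _

theorem order_aux {F : Type} [Field F] (c : F) (hc : c ≠ 0) (a : F) (n : ℤ) (hn : n < 1) :
    ((HahnSeries.single (-1 : ℤ) c + HahnSeries.C a)⁻¹ : LaurentSeries F).coeff n = 0 := by
  set g : LaurentSeries F := HahnSeries.single (-1 : ℤ) c + HahnSeries.C a with hg
  have hc1 : g.coeff (-1) = c := by simp [hg]
  have hg0 : g ≠ 0 := by
    intro h; rw [h] at hc1; exact hc hc1.symm
  have ho : g.order = -1 := by
    apply le_antisymm
    · apply HahnSeries.order_le_of_coeff_ne_zero; rw [hc1]; exact hc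
    · by_contra hlt
      have h1 : g.coeff g.order ≠ 0 := HahnSeries.coeff_order_eq_zero.not.2 hg0
      apply h1
      have h2 : g.order ≠ -1 := by omega
      have h3 : g.order ≠ 0 := by omega
      rw [hg, HahnSeries.coeff_add, HahnSeries.C_apply, HahnSeries.coeff_single_of_ne,
        HahnSeries.coeff_single_of_ne, add_zero]
      · exact h3
      · exact h2
  have h1 : g * g⁻¹ = 1 := mul_inv_cancel₀ hg0
  have h2 := HahnSeries.order_mul hg0 (inv_ne_zero hg0)
  rw [h1, HahnSeries.order_one, ho] at h2
  apply HahnSeries.coeff_eq_zero_of_lt_order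
  omega

theorem single_add_ne {F : Type} [Field F] (c : F) (hc : c ≠ 0) (a : F) :
    (HahnSeries.single (-1 : ℤ) c + HahnSeries.C a : LaurentSeries F) ≠ 0 := by
  intro h
  have := congrArg (fun x : LaurentSeries F => x.coeff (-1)) h
  simp at this
  exact hc this

theorem Bd_inv {r : ℕ} : ∀ {m : ℕ} (i : Fin m) (q : RF k r),
    Bd k r m 1 ((xv k r i - ey k r m q)⁻¹)
  | m + 1, i, q => fun n => by
    induction i using Fin.cases with
    | zero =>
      rw [map_inv₀, map_sub, EE_xv_zero, EE_ey]
      set y := ey k r m q with hy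
      rw [show (HahnSeries.single (-1 : ℤ) (1 : RF k (r + m)) - HahnSeries.C y :
        LaurentSeries (RF k (r + m))) = HahnSeries.single (-1) 1 + HahnSeries.C (-y) from by
          rw [map_neg, sub_eq_add_neg]]
      set h : LaurentSeries (RF k (r + m)) :=
        (HahnSeries.single (-1) 1 + HahnSeries.C (-y))⁻¹ with hh
      have hne : (HahnSeries.single (-1 : ℤ) (1 : RF k (r + m)) + HahnSeries.C (-y) :
        LaurentSeries (RF k (r + m))) ≠ 0 := single_add_ne _ one_ne_zero _
      have h1 : (HahnSeries.single (-1 : ℤ) (1 : RF k (r + m)) + HahnSeries.C (-y)) * h = 1 :=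
        mul_inv_cancel₀ hne
      have hneg : ∀ n : ℤ, n < 1 → h.coeff n = 0 := fun n hn => order_aux _ one_ne_zero _ n hn
      have hrec : ∀ n : ℤ, h.coeff (n + 1) = (if n = 0 then 1 else 0) + y * h.coeff n := by
        intro n
        have h2 := congrArg (fun x : LaurentSeries _ => x.coeff n) h1
        simp only [add_mul, HahnSeries.coeff_add, HahnSeries.coeff_one, HahnSeries.C_apply,
          HahnSeries.coeff_single_mul, sub_neg_eq_add, sub_zero, one_mul] at h2
        by_cases hn0 : n = 0
        · rw [if_pos hn0] at h2 ⊢; rw [← h2]; ring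
        · rw [if_neg hn0] at h2 ⊢; rw [← h2]; ring
      have key : ∀ j : ℕ, Bd k r m (1 - (j : ℤ)) (h.coeff j) := by
        intro j
        induction j with
        | zero => rw [hneg]; exact Bd_zero _; simp
        | succ j ih =>
          push_cast
          rw [hrec]
          refine Bd_add ?_ ?_
          · split_ifs with hj
            · exact Bd_mono (by omega) Bd_one
            · exact Bd_zero _
          · refine Bd_mono ?_ (Bd_mul (Bd_ey q) ih)
            omega
      by_cases hn : n < 1
      · rw [hneg n hn]; exact Bd_zero _
      · have := key n.toNat
        rwa [Int.toNat_of_nonneg (by omega)] at this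
    | succ i =>
      rw [map_inv₀, map_sub, EE_xv_succ, EE_ey, ← map_sub, ← map_inv₀, HahnSeries.C_apply,
        HahnSeries.coeff_single]
      split_ifs with h
      · subst h; exact Bd_inv i q
      · exact Bd_zero _

/-- iterated coefficients -/
def Cc (k : Type) [Field k] (r : ℕ) : (m : ℕ) → (Fin m → ℤ) → RF k (r + m) → RF k r
  | 0, _, g => g
  | m + 1, n, g => Cc k r m (fun i => n i.succ) ((EE k (r + m) g).coeff (n 0))

theorem Cc_zero {r : ℕ} : ∀ {m : ℕ} (n : Fin m → ℤ), Cc k r m n 0 = 0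
  | 0, _ => rfl
  | m + 1, n => by
    simp only [Cc]; rw [map_zero, HahnSeries.coeff_zero, Cc_zero]

theorem Cc_add {r : ℕ} : ∀ {m : ℕ} (n : Fin m → ℤ) (f g : RF k (r + m)),
    Cc k r m n (f + g) = Cc k r m n f + Cc k r m n g
  | 0, _, _, _ => rfl
  | m + 1, n, f, g => by
    simp only [Cc]; rw [map_add, HahnSeries.coeff_add, Cc_add]

theorem Cc_neg {r : ℕ} : ∀ {m : ℕ} (n : Fin m → ℤ) (f : RF k (r + m)),
    Cc k r m n (-f) = -Cc k r m n f
  | 0, _, _ => rfl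
  | m + 1, n, f => by
    simp only [Cc]; rw [map_neg, HahnSeries.coeff_neg, Cc_neg]

theorem Cc_Bd {r : ℕ} : ∀ {m : ℕ} {R : ℤ} {g : RF k (r + m)} (_ : Bd k r m R g)
    (n : Fin m → ℤ) (_ : ∑ i, n i < R), Cc k r m n g = 0
  | 0, R, g, hg, n, hn => hg (by simpa using hn)
  | m + 1, R, g, hg, n, hn => by
    rw [Fin.sum_univ_succ] at hn
    exact Cc_Bd (hg (n 0)) _ (by omega)

/-- Laurent monomials -/
def mon (k : Type) [Field k] (r : ℕ) {m : ℕ} (μ : Fin m → ℤ) : RF k (r + m) :=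
  ∏ i, (xv k r i) ^ (μ i)

theorem Cc_mon {r : ℕ} : ∀ {m : ℕ} (n μ : Fin m → ℤ) (q : RF k r),
    Cc k r m n (ey k r m q * mon k r μ) = if n = -μ then q else 0
  | 0, n, μ, q => by
    have : n = -μ := Subsingleton.elim _ _
    rw [if_pos this]; simp only [Cc, mon, Finset.univ_eq_empty, Finset.prod_empty]
    rw [ey_zero]; exact mul_one q
  | m + 1, n, μ, q => by
    have hE : EE k (r + m) (ey k r (m + 1) q * mon k r μ) =
        HahnSeries.single (-μ 0) (ey k r m q * mon k r (fun i => μ i.succ)) := by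
      rw [map_mul, mon, Fin.prod_univ_succ, map_mul, EE_ey, map_zpow₀, EE_xv_zero, map_prod]
      simp only [map_zpow₀, EE_xv_succ]
      simp only [← map_zpow₀, ← map_prod]
      rw [mul_left_comm, ← map_mul, RatFunc.single_zpow, ← zpow_mul, neg_one_mul,
        ← RatFunc.single_zpow, HahnSeries.C_apply, HahnSeries.single_mul_single]
      simp [mon]
    simp only [Cc]
    rw [hE, HahnSeries.coeff_single]
    by_cases h0 : n 0 = -μ 0
    · rw [if_pos h0, Cc_mon]
      congr 1
      simp only [funext_iff, Fin.forall_fin_succ (P := fun i => n i = (-μ) i), eq_iff_iff]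
      simp [h0]
    · rw [if_neg h0, Cc_zero, if_neg]
      intro h; exact h0 (by rw [h]; rfl)

/-- all iterated coefficients in B -/
def Coef {r m : ℕ} (B : AddSubgroup (RF k r)) (g : RF k (r + m)) : Prop :=
  ∀ n, Cc k r m n g ∈ B

theorem Coef_succ {r m : ℕ} (B : AddSubgroup (RF k r)) (g : RF k (r + (m + 1))) :
    Coef (m := m + 1) B g ↔ ∀ n : ℤ, Coef (m := m) B ((EE k (r + m) g).coeff n) := by
  constructor
  · intro h n n'
    have := h (Fin.cons n n')
    simpa [Cc] using this
  · intro h n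
    exact h (n 0) _

theorem Coef_add {r m : ℕ} {B : AddSubgroup (RF k r)} {f g : RF k (r + m)} (hf : Coef B f)
    (hg : Coef B g) : Coef B (f + g) := fun n => by
  rw [Cc_add]; exact B.add_mem (hf n) (hg n)

theorem Coef_neg {r m : ℕ} {B : AddSubgroup (RF k r)} {f : RF k (r + m)} (hf : Coef B f) :
    Coef B (-f) := fun n => by
  rw [Cc_neg]; exact B.neg_mem (hf n)

theorem Coef_xv {r : ℕ} {B : AddSubgroup (RF k r)} : ∀ {m : ℕ} (i : Fin m) {g : RF k (r + m)}
    (_ : Coef B g), Coef B (xv k r i * g)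
  | m + 1, i, g, hg => by
    rw [Coef_succ] at hg ⊢
    intro n
    rw [map_mul]
    induction i using Fin.cases with
    | zero =>
      rw [EE_xv_zero, HahnSeries.coeff_single_mul, one_mul]
      exact hg _
    | succ i =>
      rw [EE_xv_succ, HahnSeries.C_apply, HahnSeries.coeff_single_mul]
      exact Coef_xv i (hg _)

end PartTwo


section PartThree

variable {k : Type} [Field k]

/-- span of products -/
def TT {A1 A2 F : Type} [Field A1] [Field A2] [Field F] (e1 : A1 →+* F) (e2 : A2 →+* F)
    (A : AddSubgroup A1) (B : AddSubgroup A2) : AddSubgroup F :=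
  AddSubgroup.closure {x | ∃ p ∈ A, ∃ q ∈ B, x = e1 p * e2 q}

theorem TT_mul {A1 A2 F : Type} [Field A1] [Field A2] [Field F] (e1 : A1 →+* F) (e2 : A2 →+* F)
    (B : AddSubgroup A2) (p : A1) (x : F) (hx : x ∈ TT e1 e2 ⊤ B) : e1 p * x ∈ TT e1 e2 ⊤ B := by
  unfold TT at hx ⊢
  induction hx using AddSubgroup.closure_induction with
  | mem x hx =>
    obtain ⟨p', _, q, hq, rfl⟩ := hx
    refine AddSubgroup.subset_closure ⟨p * p', trivial, q, hq, ?_⟩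
    rw [map_mul, mul_assoc]
  | zero => rw [mul_zero]; exact zero_mem _
  | add x y _ _ hx hy => rw [mul_add]; exact add_mem hx hy
  | neg x _ hx => rw [mul_neg]; exact neg_mem hx

def ex (k : Type) [Field k] (r m : ℕ) : RF k m →+* RF k (r + m) :=
  embMap (Fin.castLE (Nat.le_add_left m r)) (Fin.castLE_injective _)

theorem ex_zv (r m : ℕ) (i : Fin m) : ex k r m (zv i) = xv k r i := embMap_zv _ _ _

theorem ey_zv (r m : ℕ) (s : Fin r) : ey k r m (zv s) = zv (Fin.addNat s m) := embMap_zv _ _ _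

theorem ey_c (r m : ℕ) (c : k) : ey k r m (algebraMap k _ c) = algebraMap k _ c := embMap_c _ _ _

/-- data of a shift expansion -/
structure SD (k : Type) [Field k] (r m : ℕ) (F : Type) [Field F] where
  ψ : RF k (r + m) →+* F
  S : RF k (r + m) →+* LaurentSeries F
  c : RF k m
  hc : c ≠ 0
  hSx : ∀ i : Fin m, S (xv k r i) =
    HahnSeries.single (-1) (ψ (ex k r m c)) + HahnSeries.C (ψ (xv k r i))
  hSy : ∀ q, S (ey k r m q) = HahnSeries.C (ψ (ey k r m q))

def Od {F : Type} [Field F] (R : ℤ) (g : LaurentSeries F) : Prop := ∀ n < R, g.coeff n = 0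

theorem Od_mul {F : Type} [Field F] {R R' : ℤ} {f g : LaurentSeries F} (hf : Od R f)
    (hg : Od R' g) : Od (R + R') (f * g) := fun n hn => by
  rw [HahnSeries.coeff_mul]
  apply Finset.sum_eq_zero
  intro ij hij
  have h := (Finset.mem_antidiagonal.1 hij).2.2
  by_cases h1 : ij.1 < R
  · rw [hf _ h1, zero_mul]
  · rw [hg _ (by omega), mul_zero]

variable {r m : ℕ} {F : Type} [Field F] (d : SD k r m F)

theorem SD.hcF : d.ψ (ex k r m d.c) ≠ 0 := by
  rw [Ne, map_eq_zero, map_eq_zero]; exact d.hc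

def Fil (R : ℤ) : AddSubgroup (RF k (r + m)) where
  carrier := {f | Bd k r m R f ∧ Od R (d.S f)}
  zero_mem' := ⟨Bd_zero _, fun n _ => by rw [map_zero, HahnSeries.coeff_zero]⟩
  add_mem' := fun {f g} hf hg => ⟨Bd_add hf.1 hg.1, fun n hn => by
    rw [map_add, HahnSeries.coeff_add, hf.2 n hn, hg.2 n hn, add_zero]⟩
  neg_mem' := fun {f} hf => ⟨Bd_neg hf.1, fun n hn => by
    rw [map_neg, HahnSeries.coeff_neg, hf.2 n hn, neg_zero]⟩

theorem Fil_mono {R R' : ℤ} (h : R' ≤ R) {f} (hf : f ∈ Fil d R) : f ∈ Fil d R' :=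
  ⟨Bd_mono h hf.1, fun n hn => hf.2 n (by omega)⟩

theorem Fil_mul {R R' : ℤ} {f g} (hf : f ∈ Fil d R) (hg : g ∈ Fil d R') :
    f * g ∈ Fil d (R + R') :=
  ⟨Bd_mul hf.1 hg.1, by rw [map_mul]; exact Od_mul hf.2 hg.2⟩

theorem Fil_ey (q : RF k r) : ey k r m q ∈ Fil d 0 :=
  ⟨Bd_ey q, fun n hn => by
    rw [d.hSy, HahnSeries.C_apply, HahnSeries.coeff_single_of_ne]; omega⟩

theorem Fil_one : 1 ∈ Fil d 0 := by
  have := Fil_ey d 1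
  rwa [map_one] at this

theorem Fil_xv (i : Fin m) : xv k r i ∈ Fil d (-1) :=
  ⟨Bd_xv i, fun n hn => by
    rw [d.hSx, HahnSeries.C_apply, HahnSeries.coeff_add, HahnSeries.coeff_single_of_ne,
      HahnSeries.coeff_single_of_ne, add_zero] <;> omega⟩

theorem S_sub (i : Fin m) (q : RF k r) : d.S (xv k r i - ey k r m q) =
    HahnSeries.single (-1) (d.ψ (ex k r m d.c)) +
      HahnSeries.C (d.ψ (xv k r i) - d.ψ (ey k r m q)) := by
  rw [map_sub, d.hSx, d.hSy, map_sub, add_sub_assoc]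

theorem sub_ne (d : SD k r m F) (i : Fin m) (q : RF k r) : xv k r i - ey k r m q ≠ 0 := by
  intro h
  have h1 := S_sub d i q
  rw [h, map_zero] at h1
  exact single_add_ne _ d.hcF _ h1.symm

theorem Fil_inv (i : Fin m) (q : RF k r) : (xv k r i - ey k r m q)⁻¹ ∈ Fil d 1 :=
  ⟨Bd_inv i q, fun n hn => by
    rw [map_inv₀, S_sub]; exact order_aux _ d.hcF _ n hn⟩

theorem Fil_xvinv (i : Fin m) : (xv k r i)⁻¹ ∈ Fil d 1 := by
  have := Fil_inv d i 0
  rwa [map_zero, sub_zero] at this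

theorem Fil_pow {R : ℤ} {f} (hf : f ∈ Fil d R) (n : ℕ) : f ^ n ∈ Fil d (n * R) := by
  induction n with
  | zero => simpa using Fil_one d
  | succ n ih =>
    rw [pow_succ]
    exact Fil_mono d (by push_cast; linarith) (Fil_mul d ih hf)

theorem Fil_zpow (i : Fin m) (e : ℤ) : (xv k r i) ^ e ∈ Fil d (-e) := by
  obtain ⟨n, rfl | rfl⟩ := e.eq_nat_or_neg
  · rw [zpow_natCast]; exact Fil_mono d (by omega) (Fil_pow d (Fil_xv d i) n)
  · rw [zpow_neg, zpow_natCast, ← inv_pow]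
    exact Fil_mono d (by omega) (Fil_pow d (Fil_xvinv d i) n)

theorem Fil_mon (μ : Fin m → ℤ) : mon k r μ ∈ Fil d (-∑ i, μ i) := by
  have : ∀ s : Finset (Fin m), ∏ i ∈ s, (xv k r i) ^ (μ i) ∈ Fil d (-∑ i ∈ s, μ i) := by
    intro s
    induction s using Finset.induction_on with
    | empty => simpa using Fil_one d
    | insert a s ha ih =>
      rw [Finset.prod_insert ha, Finset.sum_insert ha]
      exact Fil_mono d (by omega) (Fil_mul d (Fil_zpow d a (μ a)) ih)
  exact this Finset.univ

/-- Laurent polynomials in x with coefficients in k(y) -/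
def PP (k : Type) [Field k] (r m : ℕ) : AddSubgroup (RF k (r + m)) :=
  AddSubgroup.closure {x | ∃ q μ, x = ey k r m q * mon k r μ}

theorem zv_ne {l : ℕ} (i : Fin l) : zv (k := k) i ≠ 0 := by
  unfold zv
  rw [Ne, map_eq_zero_iff _ (IsFractionRing.injective (MvPolynomial (Fin l) k) (RF k l))]
  exact MvPolynomial.X_ne_zero i

theorem mon_add (μ ν : Fin m → ℤ) : mon k r (μ + ν) = mon k r μ * mon k r ν := by
  unfold mon
  rw [← Finset.prod_mul_distrib]
  apply Finset.prod_congr rfl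
  intro i _
  exact zpow_add₀ (zv_ne _) _ _

theorem mon_zero : mon k r (0 : Fin m → ℤ) = 1 := by
  simp [mon]

theorem mon_single (i : Fin m) (e : ℤ) : mon k r (Pi.single i e) = (xv k r i) ^ e := by
  unfold mon
  rw [Finset.prod_eq_single i]
  · rw [Pi.single_eq_same]
  · intro j _ hj; rw [Pi.single_eq_of_ne hj, zpow_zero]
  · intro h; exact absurd (Finset.mem_univ i) h

theorem PP_gen (q : RF k r) (μ : Fin m → ℤ) : ey k r m q * mon k r μ ∈ PP k r m :=
  AddSubgroup.subset_closure ⟨q, μ, rfl⟩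

theorem PP_ey (q : RF k r) : ey k r m q ∈ PP k r m := by
  have := PP_gen q (0 : Fin m → ℤ)
  rwa [mon_zero, mul_one] at this

theorem PP_zpow (i : Fin m) (e : ℤ) : (xv k r i) ^ e ∈ PP k r m := by
  have := PP_gen (1 : RF k r) (Pi.single i e : Fin m → ℤ)
  rwa [mon_single, map_one, one_mul] at this

theorem PP_mul {f g : RF k (r + m)} (hf : f ∈ PP k r m) (hg : g ∈ PP k r m) :
    f * g ∈ PP k r m := by
  unfold PP at hf
  induction hf using AddSubgroup.closure_induction with
  | mem x hx =>
    obtain ⟨q, μ, rfl⟩ := hx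
    unfold PP at hg
    induction hg using AddSubgroup.closure_induction with
    | mem x hx =>
      obtain ⟨q', μ', rfl⟩ := hx
      have := PP_gen (q * q') (μ + μ')
      rw [mon_add, map_mul] at this
      rwa [mul_mul_mul_comm]
    | zero => rw [mul_zero]; exact zero_mem _
    | add x y _ _ hx hy => rw [mul_add]; exact add_mem hx hy
    | neg x _ hx => rw [mul_neg]; exact neg_mem hx
  | zero => rw [zero_mul]; exact zero_mem _
  | add x y _ _ hx hy => rw [add_mul]; exact add_mem hx hy
  | neg x _ hx => rw [neg_mul]; exact neg_mem hx

theorem PP_bdd {f : RF k (r + m)} (hf : f ∈ PP k r m) : ∃ b, f ∈ Fil d b := by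
  unfold PP at hf
  induction hf using AddSubgroup.closure_induction with
  | mem x hx =>
    obtain ⟨q, μ, rfl⟩ := hx
    exact ⟨_, Fil_mul d (Fil_ey d q) (Fil_mon d μ)⟩
  | zero => exact ⟨0, zero_mem _⟩
  | add x y _ _ hx hy =>
    obtain ⟨a, ha⟩ := hx
    obtain ⟨b, hb⟩ := hy
    exact ⟨min a b, add_mem (Fil_mono d (min_le_left _ _) ha) (Fil_mono d (min_le_right _ _) hb)⟩
  | neg x _ hx =>
    obtain ⟨a, ha⟩ := hx
    exact ⟨a, neg_mem ha⟩

theorem PP_exp {f : RF k (r + m)} (hf : f ∈ PP k r m) : ∃ s : Finset (Fin m → ℤ),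
    ∀ s', s ⊆ s' → f = ∑ n ∈ s', ey k r m (Cc k r m n f) * mon k r (-n) := by
  unfold PP at hf
  induction hf using AddSubgroup.closure_induction with
  | mem x hx =>
    obtain ⟨q, μ, rfl⟩ := hx
    refine ⟨{-μ}, fun s' hs' => ?_⟩
    rw [Finset.sum_eq_single (-μ)]
    · rw [Cc_mon, if_pos rfl, neg_neg]
    · intro n _ hn
      rw [Cc_mon, if_neg hn, map_zero, zero_mul]
    · intro h; exact absurd (hs' (Finset.mem_singleton_self _)) h
  | zero => exact ⟨∅, fun s' _ => by simp [Cc_zero]⟩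
  | add x y _ _ hx hy =>
    obtain ⟨a, ha⟩ := hx
    obtain ⟨b, hb⟩ := hy
    refine ⟨a ∪ b, fun s' hs' => ?_⟩
    simp only [Cc_add, map_add, add_mul, Finset.sum_add_distrib]
    rw [← ha s' (Finset.union_subset_left hs'), ← hb s' (Finset.union_subset_right hs')]
  | neg x _ hx =>
    obtain ⟨a, ha⟩ := hx
    refine ⟨a, fun s' hs' => ?_⟩
    simp only [Cc_neg, map_neg, neg_mul, Finset.sum_neg_distrib]
    rw [← ha s' hs']

def Good (f : RF k (r + m)) : Prop := ∀ R, ∃ τ ∈ PP k r m, f - τ ∈ Fil d R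

theorem Good_PP {f : RF k (r + m)} (hf : f ∈ PP k r m) : Good d f :=
  fun R => ⟨f, hf, by rw [sub_self]; exact zero_mem _⟩

theorem Good_bdd {f : RF k (r + m)} (hf : Good d f) : ∃ b, f ∈ Fil d b := by
  obtain ⟨τ, h1, h2⟩ := hf 0
  obtain ⟨b, hb⟩ := PP_bdd d h1
  refine ⟨min 0 b, ?_⟩
  have := add_mem (Fil_mono d (min_le_left 0 b) h2) (Fil_mono d (min_le_right _ _) hb)
  rwa [sub_add_cancel] at this

theorem Good_add {f g : RF k (r + m)} (hf : Good d f) (hg : Good d g) : Good d (f + g) := by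
  intro R
  obtain ⟨τ, h1, h2⟩ := hf R
  obtain ⟨σ, h3, h4⟩ := hg R
  refine ⟨τ + σ, add_mem h1 h3, ?_⟩
  have := add_mem h2 h4
  rwa [sub_add_sub_comm] at this

theorem Good_mul {f g : RF k (r + m)} (hf : Good d f) (hg : Good d g) : Good d (f * g) := by
  intro R
  obtain ⟨b, hb⟩ := Good_bdd d hf
  obtain ⟨σ, h1, h2⟩ := hg (R - b)
  obtain ⟨b', hb'⟩ := PP_bdd d h1
  obtain ⟨τ, h3, h4⟩ := hf (R - b')
  refine ⟨τ * σ, PP_mul h3 h1, ?_⟩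
  have e : f * g - τ * σ = f * (g - σ) + (f - τ) * σ := by ring
  rw [e]
  exact add_mem (Fil_mono d (by omega) (Fil_mul d hb h2))
    (Fil_mono d (by omega) (Fil_mul d h4 hb'))

theorem Good_pow {f : RF k (r + m)} (hf : Good d f) (n : ℕ) : Good d (f ^ n) := by
  induction n with
  | zero =>
    rw [pow_zero]
    have := PP_ey (k := k) (r := r) (m := m) 1
    rw [map_one] at this
    exact Good_PP d this
  | succ n ih => rw [pow_succ]; exact Good_mul d ih hf

theorem Good_inv (i : Fin m) (q : RF k r) : Good d ((xv k r i - ey k r m q)⁻¹) := by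
  have hne := sub_ne d i q
  have hx : xv k r i ≠ 0 := zv_ne _
  have key : ∀ N : ℕ, ∃ τ ∈ PP k r m, (xv k r i - ey k r m q)⁻¹ - τ =
      (ey k r m q) ^ N * (xv k r i)⁻¹ ^ N * (xv k r i - ey k r m q)⁻¹ := by
    intro N
    induction N with
    | zero => exact ⟨0, zero_mem _, by simp⟩
    | succ N ih =>
      obtain ⟨τ, h1, h2⟩ := ih
      refine ⟨τ + ey k r m (q ^ N) * (xv k r i) ^ (-(N : ℤ) - 1),
        add_mem h1 (PP_mul (PP_ey _) (PP_zpow _ _)), ?_⟩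
      rw [← sub_sub, h2, map_pow, zpow_sub_one₀ hx, zpow_neg, zpow_natCast, ← inv_pow]
      generalize ey k r m q = y at *
      have e : (xv k r i - y)⁻¹ - (xv k r i)⁻¹ = y * (xv k r i)⁻¹ * (xv k r i - y)⁻¹ := by
        field_simp; ring
      calc _ = y ^ N * (xv k r i)⁻¹ ^ N * ((xv k r i - y)⁻¹ - (xv k r i)⁻¹) := by ring
        _ = _ := by rw [e]; ring
  intro R
  obtain ⟨τ, h1, h2⟩ := key R.toNat
  refine ⟨τ, h1, ?_⟩
  rw [h2]
  refine Fil_mono d ?_ (Fil_mul d (Fil_mul d (Fil_pow d (Fil_ey d q) _)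
    (Fil_pow d (Fil_xvinv d i) _)) (Fil_inv d i q))
  have := Int.self_le_toNat R
  omega

theorem S_mon (μ : Fin m → ℤ) : d.S (mon k r μ) = mapL (d.ψ.comp (ex k r m))
    (∏ i, (HahnSeries.single (-1) d.c + HahnSeries.C (zv i)) ^ (μ i)) := by
  rw [mon, map_prod, map_prod]
  apply Finset.prod_congr rfl
  intro i _
  rw [map_zpow₀, map_zpow₀, d.hSx]
  congr 1
  ext n
  rw [mapL_coeff, HahnSeries.C_apply, HahnSeries.C_apply, HahnSeries.coeff_add,
    HahnSeries.coeff_add, HahnSeries.coeff_single, HahnSeries.coeff_single,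
    HahnSeries.coeff_single, HahnSeries.coeff_single]
  split_ifs <;> simp [ex_zv]

theorem S_term (B : AddSubgroup (RF k r)) (q : RF k r) (hq : q ∈ B) (μ : Fin m → ℤ) (n : ℤ) :
    (d.S (ey k r m q * mon k r μ)).coeff n ∈
      TT (d.ψ.comp (ex k r m)) (d.ψ.comp (ey k r m)) ⊤ B := by
  rw [map_mul, d.hSy, HahnSeries.C_apply, HahnSeries.coeff_single_mul, S_mon, mapL_coeff]
  refine AddSubgroup.subset_closure ⟨(∏ i, (HahnSeries.single (-1) d.c + HahnSeries.C (zv i)) ^ (μ i) : LaurentSeries (RF k m)).coeff (n - 0), trivial, q, hq, ?_⟩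
  rw [mul_comm]; rfl

theorem Good_main (B : AddSubgroup (RF k r)) {f : RF k (r + m)} (hf : Good d f)
    (hB : Coef B f) (n : ℤ) : (d.S f).coeff n ∈
      TT (d.ψ.comp (ex k r m)) (d.ψ.comp (ey k r m)) ⊤ B := by
  obtain ⟨τ, h1, h2⟩ := hf (n + 1)
  obtain ⟨s, hs⟩ := PP_exp h1
  have e1 : (d.S f).coeff n = (d.S τ).coeff n := by
    have := h2.2 n (by omega)
    rw [map_sub, HahnSeries.coeff_sub] at this
    exact sub_eq_zero.1 this
  rw [e1, hs s (Finset.Subset.refl _), map_sum]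
  rw [show (∑ x ∈ s, d.S (ey k r m (Cc k r m x τ) * mon k r (-x))).coeff n =
    ∑ x ∈ s, (d.S (ey k r m (Cc k r m x τ) * mon k r (-x))).coeff n from
      map_sum (HahnSeries.coeff.addMonoidHom n) _ _]
  apply sum_mem
  intro x hx
  by_cases hlt : ∑ i, x i < n + 1
  · apply S_term
    have h3 := Cc_Bd h2.1 x hlt
    rw [sub_eq_add_neg, Cc_add, Cc_neg, ← sub_eq_add_neg, sub_eq_zero] at h3
    rw [← h3]; exact hB x
  · have h4 := Fil_mul d (Fil_ey d (Cc k r m x τ)) (Fil_mon d (-x))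
    rw [h4.2 n]
    · exact zero_mem _
    · simp only [Pi.neg_apply, Finset.sum_neg_distrib]; omega

/-- admissible denominators -/
def VV (v : RF k (r + m)) : Prop :=
  (∀ (B : AddSubgroup (RF k r)) f, Coef B f → Coef B (v * f)) ∧
    ∃ v' : RF k m, v' ≠ 0 ∧ v = ex k r m v' ∧ d.S v = HahnSeries.C (d.ψ v)

theorem VV_one : VV d 1 := by
  refine ⟨fun B f h => by rwa [one_mul], 1, one_ne_zero, by rw [map_one], by
    rw [map_one, map_one, map_one]⟩

theorem VV_mul {v w} (hv : VV d v) (hw : VV d w) : VV d (v * w) := by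
  obtain ⟨h1, v', h2, h3, h4⟩ := hv
  obtain ⟨g1, w', g2, g3, g4⟩ := hw
  refine ⟨fun B f h => ?_, v' * w', mul_ne_zero h2 g2, by rw [map_mul, h3, g3], ?_⟩
  · rw [mul_assoc]; exact h1 _ _ (g1 _ _ h)
  · rw [map_mul, h4, g4, map_mul, map_mul]

theorem VV_pow {v} (hv : VV d v) (n : ℕ) : VV d (v ^ n) := by
  induction n with
  | zero => rw [pow_zero]; exact VV_one d
  | succ n ih => rw [pow_succ]; exact VV_mul d ih hv

theorem zv_inj {l : ℕ} {i j : Fin l} (h : zv (k := k) i = zv j) : i = j := by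
  unfold zv at h
  exact MvPolynomial.X_injective
    (IsFractionRing.injective (MvPolynomial (Fin l) k) (RF k l) h)

theorem VV_sub {i j : Fin m} (hij : i ≠ j) : VV d (xv k r i - xv k r j) := by
  refine ⟨fun B f h => ?_, zv i - zv j, ?_, ?_, ?_⟩
  · rw [sub_mul, sub_eq_add_neg]
    exact Coef_add (Coef_xv i h) (Coef_neg (Coef_xv j h))
  · rw [sub_ne_zero]; exact fun h => hij (zv_inj h)
  · rw [map_sub, ex_zv, ex_zv]
  · rw [map_sub, d.hSx, d.hSx, map_sub, map_sub, add_sub_add_left_eq_sub]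

def SGood (f : RF k (r + m)) : Prop := ∃ v, VV d v ∧ Good d (v * f)

theorem SGood_of {f : RF k (r + m)} (h : Good d f) : SGood d f :=
  ⟨1, VV_one d, by rwa [one_mul]⟩

theorem SGood_mul {f g : RF k (r + m)} (hf : SGood d f) (hg : SGood d g) : SGood d (f * g) := by
  obtain ⟨v, h1, h2⟩ := hf
  obtain ⟨w, h3, h4⟩ := hg
  exact ⟨v * w, VV_mul d h1 h3, by rw [mul_mul_mul_comm]; exact Good_mul d h2 h4⟩

theorem zv_cases (i : Fin (r + m)) : (∃ j : Fin m, i = Fin.castLE (Nat.le_add_left m r) j ∧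
    zv (k := k) i = xv k r j) ∨
    (∃ s : Fin r, zv (k := k) i = ey k r m (zv s)) := by
  by_cases h : (i : ℕ) < m
  · left; exact ⟨⟨i, h⟩, rfl, rfl⟩
  · right
    refine ⟨⟨i - m, by omega⟩, ?_⟩
    rw [ey_zv]
    congr 1
    ext; simp; omega

theorem Good_xv (i : Fin m) : Good d (xv k r i) := by
  have := PP_zpow (k := k) (r := r) i 1
  rw [zpow_one] at this
  exact Good_PP d this

theorem Good_neg {f : RF k (r + m)} (hf : Good d f) : Good d (-f) := by
  have := PP_ey (k := k) (r := r) (m := m) (-1)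
  rw [map_neg, map_one] at this
  have := Good_mul d (Good_PP d this) hf
  rwa [neg_one_mul] at this

theorem Good_zv (i : Fin (r + m)) : Good d (zv i) := by
  rcases zv_cases (k := k) i with ⟨j, _, h⟩ | ⟨s, h⟩
  · rw [h]; exact Good_xv d j
  · rw [h]; exact Good_PP d (PP_ey _)

theorem Good_poly (p : MvPolynomial (Fin (r + m)) k) : Good d (algebraMap _ (RF k (r + m)) p) := by
  induction p using MvPolynomial.induction_on with
  | C a =>
    have h := PP_ey (k := k) (r := r) (m := m) (algebraMap k _ a)
    rw [ey_c, IsScalarTower.algebraMap_apply k (MvPolynomial (Fin (r + m)) k)] at h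
    exact Good_PP d h
  | add p q hp hq => rw [map_add]; exact Good_add d hp hq
  | mul_X p i hp => rw [map_mul]; exact Good_mul d hp (Good_zv d i)

theorem SGood_fac (i j : Fin (r + m)) (hij : i < j) (e : ℤ) :
    SGood d ((zv i - zv j) ^ e) := by
  have hpos : ∀ n : ℕ, Good d ((zv i - zv j) ^ n) := fun n => by
    apply Good_pow
    rw [sub_eq_add_neg]
    exact Good_add d (Good_zv d i) (Good_neg d (Good_zv d j))
  obtain ⟨n, rfl | rfl⟩ := e.eq_nat_or_neg
  · rw [zpow_natCast]; exact SGood_of d (hpos n)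
  · rw [zpow_neg, zpow_natCast]
    have hne : zv (k := k) i - zv j ≠ 0 := sub_ne_zero.2 fun h => hij.ne (zv_inj h)
    rcases zv_cases (k := k) i with ⟨i', hi, hi2⟩ | ⟨s, hs⟩ <;>
      rcases zv_cases (k := k) j with ⟨j', hj, hj2⟩ | ⟨t, ht⟩
    · refine ⟨(zv i - zv j) ^ n, VV_pow d ?_ n, ?_⟩
      · rw [hi2, hj2]
        refine VV_sub d ?_
        rintro rfl
        exact hij.ne (hi.trans hj.symm)
      · rw [mul_inv_cancel₀ (pow_ne_zero _ hne)]
        have := hpos 0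
        rwa [pow_zero] at this
    · rw [hi2, ht, ← inv_pow]
      exact SGood_of d (Good_pow d (Good_inv d _ _) n)
    · rw [hs, hj2, ← neg_sub, ← inv_pow, inv_neg]
      exact SGood_of d (Good_pow d (Good_neg d (Good_inv d _ _)) n)
    · rw [hs, ht, ← map_sub, ← map_pow, ← map_inv₀]
      exact SGood_of d (Good_PP d (PP_ey _))

theorem SGood_one : SGood d 1 := by
  have := Good_pow d (Good_poly d 0) 0
  rw [pow_zero] at this
  exact SGood_of d this

theorem lemmaX (B : AddSubgroup (RF k r)) (α : RF k (r + m)) (hα : α ∈ Phi k (r + m))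
    (hB : Coef B α) (n : ℤ) : (d.S α).coeff n ∈
      TT (d.ψ.comp (ex k r m)) (d.ψ.comp (ey k r m)) ⊤ B := by
  have hs : SGood d α := by
    obtain ⟨p, e, rfl⟩ := hα
    refine SGood_mul d (SGood_of d (Good_poly d p)) ?_
    refine Finset.prod_induction _ (SGood d) (fun _ _ => SGood_mul d) (SGood_one d) ?_
    intro i _
    refine Finset.prod_induction _ (SGood d) (fun _ _ => SGood_mul d) (SGood_one d) ?_
    intro j _
    split_ifs with h
    · exact SGood_fac d i j h _
    · exact SGood_one d
  obtain ⟨v, ⟨h1, v', h2, h3, h4⟩, h5⟩ := hs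
  have key := Good_main d B h5 (h1 B α hB) n
  rw [map_mul, h4, HahnSeries.C_apply, HahnSeries.coeff_single_mul, sub_zero] at key
  have h6 := TT_mul (d.ψ.comp (ex k r m)) (d.ψ.comp (ey k r m)) B v'⁻¹ _ key
  have hv : d.ψ v ≠ 0 := by
    rw [Ne, map_eq_zero, h3, map_eq_zero]; exact h2
  rw [map_inv₀, RingHom.comp_apply, ← h3, inv_mul_cancel_left₀ hv] at h6
  exact h6

end PartThree


section PartFour

variable {k : Type} [Field k]

theorem TT_swap {A1 A2 F : Type} [Field A1] [Field A2] [Field F] (e1 : A1 →+* F) (e2 : A2 →+* F)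
    (A : AddSubgroup A1) (B : AddSubgroup A2) : TT e1 e2 A B = TT e2 e1 B A := by
  unfold TT
  congr 1
  ext x
  constructor
  · rintro ⟨p, hp, q, hq, rfl⟩; exact ⟨q, hq, p, hp, mul_comm _ _⟩
  · rintro ⟨p, hp, q, hq, rfl⟩; exact ⟨q, hq, p, hp, mul_comm _ _⟩

theorem Coef_Om {G : Type} (Ω : ∀ l : ℕ, (Fin l → G) → Submodule k (RF k l))
    (H4 : ∀ (l : ℕ) (a : Fin (l + 1) → G), ∀ α ∈ Ω (l + 1) a, ∀ n : ℤ,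
      (EE k l α).coeff n ∈ Ω l (a ∘ Fin.succ)) (r : ℕ) :
    ∀ (m : ℕ) (a : Fin (r + m) → G) (α : RF k (r + m)), α ∈ Ω (r + m) a →
      Coef (m := m) (Ω r (fun s => a (Fin.addNat s m))).toAddSubgroup α := by
  intro m
  induction m with
  | zero => intro a α h n; exact h
  | succ m ih =>
    intro a α h
    rw [Coef_succ]
    intro n
    exact ih _ _ (H4 (r + m) a α h n)

theorem lemmaX' {G : Type} (Ω : ∀ l : ℕ, (Fin l → G) → Submodule k (RF k l))
    (hΩPhi : ∀ (l : ℕ) (a : Fin l → G), ∀ α ∈ Ω l a, α ∈ Phi k l)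
    (hΩ2 : ∀ (l : ℕ) (a : Fin l → G) (σ : Equiv.Perm (Fin l)) (α : RF k l),
      permHom σ α ∈ Ω l a ↔ α ∈ Ω l (a ∘ σ))
    (H4 : ∀ (l : ℕ) (a : Fin (l + 1) → G), ∀ α ∈ Ω (l + 1) a, ∀ n : ℤ,
      (EE k l α).coeff n ∈ Ω l (a ∘ Fin.succ))
    {r m l : ℕ} (h : l = r + m) (gx : Fin m → Fin l) (hgx : Function.Injective gx)
    (gy : Fin r → Fin l) (hgy : Function.Injective gy) (hd : ∀ i s, gx i ≠ gy s)
    (S : RF k l →+* LaurentSeries (RF k l)) (c : k) (hc : c ≠ 0)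
    (hSx : ∀ i, S (zv (gx i)) =
      HahnSeries.single (-1) (algebraMap k (RF k l) c) + HahnSeries.C (zv (gx i)))
    (hSy : ∀ s, S (zv (gy s)) = HahnSeries.C (zv (gy s)))
    (hSc : ∀ b : k, S (algebraMap k _ b) = HahnSeries.C (algebraMap k _ b))
    (a : Fin l → G) (α : RF k l) (hα : α ∈ Ω l a) (n : ℤ) :
    (S α).coeff n ∈ TT (embMap gx hgx) (embMap gy hgy) ⊤
      (Ω r (fun s => a (gy s))).toAddSubgroup := by
  subst h
  let f : Fin (r + m) → Fin (r + m) := fun i =>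
    if hi : (i : ℕ) < m then gx ⟨i, hi⟩ else gy ⟨i - m, by omega⟩
  have fx : ∀ i : Fin m, f (Fin.castLE (Nat.le_add_left m r) i) = gx i := fun i => by
    simp [f]
  have fy : ∀ s : Fin r, f (Fin.addNat s m) = gy s := fun s => by
    simp [f]
  have finj : Function.Injective f := by
    intro i j hij
    simp only [f] at hij
    split_ifs at hij with h1 h2 h2
    · have := congrArg Fin.val (hgx hij); exact Fin.ext this
    · exact absurd hij (hd _ _)
    · exact absurd hij.symm (hd _ _)
    · have := congrArg Fin.val (hgy hij); simp at this; exact Fin.ext (by omega)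
  let σ : Equiv.Perm (Fin (r + m)) := Equiv.ofBijective f (Finite.injective_iff_bijective.1 finj)
  have σx : ∀ i : Fin m, σ (Fin.castLE (Nat.le_add_left m r) i) = gx i := fx
  have σy : ∀ s : Fin r, σ (Fin.addNat s m) = gy s := fy
  have hx : (permHom (k := k) σ).comp (ex k r m) = embMap gx hgx := by
    ext1 x; exact embMap_comp _ _ σ σ.injective _ _ σx x
  have hy : (permHom (k := k) σ).comp (ey k r m) = embMap gy hgy := by
    ext1 x; exact embMap_comp _ _ σ σ.injective _ _ σy x
  have pxv : ∀ i : Fin m, permHom σ (xv k r i) = zv (gx i) := fun i => by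
    rw [← ex_zv, ← RingHom.comp_apply, hx, embMap_zv]
  let d : SD k r m (RF k (r + m)) :=
    { ψ := permHom σ
      S := S.comp (permHom σ)
      c := algebraMap k _ c
      hc := by rw [Ne, map_eq_zero]; exact hc
      hSx := fun i => by
        rw [RingHom.comp_apply, pxv, hSx, ← RingHom.comp_apply (permHom σ), hx, embMap_c]
      hSy := fun q => by
        have : (S.comp (permHom σ)).comp (ey k r m) =
            (HahnSeries.C : RF k (r+m) →+* LaurentSeries (RF k (r+m))).comp
              ((permHom σ).comp (ey k r m)) := by
          rw [RingHom.comp_assoc, hy]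
          apply rf_hom_ext
          · intro s
            rw [RingHom.comp_apply, RingHom.comp_apply, embMap_zv, hSy]
          · intro b
            rw [RingHom.comp_apply, RingHom.comp_apply, embMap_c, hSc]
        exact DFunLike.congr_fun this q }
  let β := permHom (k := k) σ⁻¹ α
  have hβ : permHom σ β = α := by
    have : (permHom (k := k) σ).comp (permHom σ⁻¹) = RingHom.id _ := by
      apply rf_hom_ext
      · intro i
        rw [RingHom.comp_apply]
        unfold permHom
        rw [embMap_zv, embMap_zv, RingHom.id_apply]
        congr 1
        exact σ.apply_symm_apply i
      · intro b
        rw [RingHom.comp_apply]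
        unfold permHom
        rw [embMap_c, embMap_c, RingHom.id_apply]
    exact DFunLike.congr_fun this α
  have hβΩ : β ∈ Ω (r + m) (a ∘ σ) := by
    rw [← hΩ2, hβ]; exact hα
  have key := lemmaX d _ β (hΩPhi _ _ _ hβΩ) (Coef_Om Ω H4 r m _ β hβΩ) n
  have e1 : d.S β = S α := by
    change S (permHom σ β) = _
    rw [hβ]
  have e2 : d.ψ.comp (ex k r m) = embMap gx hgx := hx
  have e3 : d.ψ.comp (ey k r m) = embMap gy hgy := hy
  rw [e1, e2, e3] at key
  have e4 : (fun s => (a ∘ σ) (Fin.addNat s m)) = fun s => a (gy s) := by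
    funext s; simp [σy]
  rw [e4] at key
  exact key

/-! Taylor expansion -/

variable [CharZero k]

section Taylor

variable {l : ℕ} (DD : Derivation k (RF k l) (RF k l)) (A B : RF k l →+* LaurentSeries (RF k l))

/-- the Taylor coefficients -/
def tu (l : ℕ) (j : ℕ) : LaurentSeries (RF k l) :=
  HahnSeries.single (-(j : ℤ)) (algebraMap k (RF k l) ((j.factorial : k)⁻¹))

theorem tu_succ (j : ℕ) : (tu l (j + 1) : LaurentSeries (RF k l)) * HahnSeries.C ((j + 1 : ℕ) : RF k l)
    = HahnSeries.single (-1) 1 * tu l j := by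
  unfold tu
  rw [HahnSeries.C_apply, HahnSeries.single_mul_single, HahnSeries.single_mul_single]
  congr 1
  · push_cast; ring
  · rw [one_mul, ← map_natCast (algebraMap k (RF k l)), ← map_mul, Nat.factorial_succ]
    congr 1
    have : ((j + 1 : ℕ) : k) ≠ 0 := Nat.cast_ne_zero.2 (Nat.succ_ne_zero j)
    have h2 : (j.factorial : k) ≠ 0 := Nat.cast_ne_zero.2 (Nat.factorial_ne_zero j)
    rw [Nat.cast_mul]
    field_simp

def Tay (α : RF k l) : Prop := ∃ J : ℕ, ∀ J' ≥ J,
  A α = ∑ j ∈ Finset.range J', tu l j * B (DD^[j] α)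

theorem DD_iter_add (j : ℕ) (p q : RF k l) : DD^[j] (p + q) = DD^[j] p + DD^[j] q := by
  induction j with
  | zero => rfl
  | succ j ih => simp only [Function.iterate_succ_apply', ih, map_add]

theorem DD_iter_w (j : ℕ) (p w : RF k l) (hw : DD w = 0) : DD^[j] (p * w) = DD^[j] p * w := by
  induction j with
  | zero => rfl
  | succ j ih =>
    simp only [Function.iterate_succ_apply', ih, Derivation.leibniz, hw, smul_eq_mul]
    ring

theorem DD_iter_z (j : ℕ) (p z : RF k l) (hz : DD z = 1) :
    DD^[j + 1] (p * z) = DD^[j + 1] p * z + ((j + 1 : ℕ) : RF k l) * DD^[j] p := by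
  induction j with
  | zero =>
    simp only [Function.iterate_succ_apply', Function.iterate_zero, id, Derivation.leibniz, hz,
      smul_eq_mul]
    push_cast; ring
  | succ j ih =>
    rw [Function.iterate_succ_apply', ih, map_add, Derivation.leibniz, Derivation.leibniz, hz,
      Derivation.map_natCast, ← Function.iterate_succ_apply' DD, ← Function.iterate_succ_apply' DD]
    simp only [smul_eq_mul]
    push_cast; ring

theorem Tay_poly (hz : ∀ i, DD (zv i) = 1)
    (hAB : ∀ i, A (zv i) = B (zv i) + HahnSeries.single (-1) 1)
    (hB : ∀ b : k, B (algebraMap k _ b) = HahnSeries.C (algebraMap k _ b))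
    (hABc : ∀ b : k, A (algebraMap k _ b) = B (algebraMap k _ b))
    (p : MvPolynomial (Fin l) k) : Tay DD A B (algebraMap _ (RF k l) p) := by
  induction p using MvPolynomial.induction_on with
  | C b =>
    have e : algebraMap (MvPolynomial (Fin l) k) (RF k l) (MvPolynomial.C b) =
      algebraMap k (RF k l) b := by
      rw [IsScalarTower.algebraMap_apply k (MvPolynomial (Fin l) k) (RF k l)]; rfl
    rw [e]
    refine ⟨1, fun J' hJ' => ?_⟩
    rw [Finset.sum_eq_single 0]
    · have : (tu l 0 : LaurentSeries (RF k l)) = 1 := by simp [tu]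
      rw [this, one_mul, hABc]; rfl
    · intro j _ hj
      obtain ⟨j, rfl⟩ := Nat.exists_eq_succ_of_ne_zero hj
      have : ∀ j : ℕ, DD^[j] 0 = 0 := fun j => by
        induction j with
        | zero => rfl
        | succ j ih => rw [Function.iterate_succ_apply', ih, map_zero]
      rw [Function.iterate_succ_apply, Derivation.map_algebraMap, this, map_zero, mul_zero]
    · intro h; simp at h; omega
  | add p q hp hq =>
    obtain ⟨J1, h1⟩ := hp
    obtain ⟨J2, h2⟩ := hq
    refine ⟨max J1 J2, fun J' hJ' => ?_⟩
    rw [map_add, map_add, h1 J' (le_trans (le_max_left _ _) hJ'),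
      h2 J' (le_trans (le_max_right _ _) hJ'), ← Finset.sum_add_distrib]
    refine Finset.sum_congr rfl fun j _ => ?_
    rw [DD_iter_add, map_add, mul_add]
  | mul_X p i hp =>
    obtain ⟨J, h⟩ := hp
    rw [map_mul]
    change Tay DD A B (_ * zv i)
    generalize algebraMap (MvPolynomial (Fin l) k) (RF k l) p = P at *
    refine ⟨J + 1, fun J' hJ' => ?_⟩
    obtain ⟨N, rfl⟩ : ∃ N, J' = N + 1 := ⟨J' - 1, by omega⟩
    have hterm : ∀ j : ℕ, tu l (j + 1) * B (DD^[j + 1] (P * zv i)) =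
        tu l (j + 1) * B (DD^[j + 1] P) * B (zv i) +
          HahnSeries.single (-1) 1 * (tu l j * B (DD^[j] P)) := by
      intro j
      rw [DD_iter_z DD j P _ (hz i), map_add, map_mul, map_mul, mul_add, ← mul_assoc,
        ← mul_assoc (tu l (j + 1)), ← mul_assoc (HahnSeries.single (-1) 1), ← tu_succ]
      rw [show B ((j + 1 : ℕ) : RF k l) = HahnSeries.C ((j + 1 : ℕ) : RF k l) from by
        rw [← map_natCast (algebraMap k (RF k l)), hB]]
    rw [map_mul, hAB, mul_add]
    conv_lhs => rw [h (N + 1) (by omega)]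
    conv_lhs => enter [2]; rw [← h (N + 1) (by omega), h N (by omega)]
    rw [Finset.sum_range_succ', Finset.sum_range_succ' _ N]
    simp only [hterm]
    rw [Finset.sum_add_distrib, ← Finset.mul_sum, ← Finset.sum_mul]
    simp only [Function.iterate_zero, id, map_mul]
    ring

def WW (w : RF k l) : Prop := DD w = 0 ∧ A w = B w

theorem WW_one : WW DD A B 1 := ⟨Derivation.map_one_eq_zero DD, by rw [map_one, map_one]⟩

theorem WW_mul {v w : RF k l} (hv : WW DD A B v) (hw : WW DD A B w) : WW DD A B (v * w) :=
  ⟨by rw [Derivation.leibniz, hv.1, hw.1, smul_zero, smul_zero, add_zero],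
    by rw [map_mul, map_mul, hv.2, hw.2]⟩

theorem WW_inv {v : RF k l} (hv : WW DD A B v) : WW DD A B v⁻¹ :=
  ⟨by rw [Derivation.leibniz_inv, hv.1, smul_zero], by rw [map_inv₀, map_inv₀, hv.2]⟩

theorem WW_pow {v : RF k l} (hv : WW DD A B v) (n : ℕ) : WW DD A B (v ^ n) := by
  induction n with
  | zero => rw [pow_zero]; exact WW_one DD A B
  | succ n ih => rw [pow_succ]; exact WW_mul DD A B ih hv

theorem WW_zpow {v : RF k l} (hv : WW DD A B v) (e : ℤ) : WW DD A B (v ^ e) := by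
  obtain ⟨n, rfl | rfl⟩ := e.eq_nat_or_neg
  · rw [zpow_natCast]; exact WW_pow DD A B hv n
  · rw [zpow_neg, zpow_natCast]; exact WW_inv DD A B (WW_pow DD A B hv n)

theorem Tay_Phi (hz : ∀ i, DD (zv i) = 1)
    (hAB : ∀ i, A (zv i) = B (zv i) + HahnSeries.single (-1) 1)
    (hB : ∀ b : k, B (algebraMap k _ b) = HahnSeries.C (algebraMap k _ b))
    (hABc : ∀ b : k, A (algebraMap k _ b) = B (algebraMap k _ b))
    (α : RF k l) (hα : α ∈ Phi k l) : Tay DD A B α := by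
  obtain ⟨p, e, rfl⟩ := hα
  have hw : WW DD A B
      (∏ i : Fin l, ∏ j : Fin l, (if i < j then (zv i - zv j) ^ e i j else 1)) := by
    refine Finset.prod_induction _ (WW DD A B) (fun _ _ => WW_mul DD A B) (WW_one DD A B) ?_
    intro i _
    refine Finset.prod_induction _ (WW DD A B) (fun _ _ => WW_mul DD A B) (WW_one DD A B) ?_
    intro j _
    split_ifs with h
    · refine WW_zpow DD A B ⟨by rw [map_sub, hz, hz, sub_self], ?_⟩ _
      rw [map_sub, hAB, hAB, map_sub, add_sub_add_right_eq_sub]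
    · exact WW_one DD A B
  obtain ⟨J, hJ⟩ := Tay_poly DD A B hz hAB hB hABc p
  refine ⟨J, fun J' hJ' => ?_⟩
  rw [map_mul, hJ J' hJ', hw.2, Finset.sum_mul]
  refine Finset.sum_congr rfl fun j _ => ?_
  rw [DD_iter_w DD j _ _ hw.1, map_mul, mul_assoc]

end Taylor

theorem coreAB {G : Type} (Ω : ∀ l : ℕ, (Fin l → G) → Submodule k (RF k l))
    (hΩPhi : ∀ (l : ℕ) (a : Fin l → G), ∀ α ∈ Ω l a, α ∈ Phi k l)
    (hΩ2 : ∀ (l : ℕ) (a : Fin l → G) (σ : Equiv.Perm (Fin l)) (α : RF k l),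
      permHom σ α ∈ Ω l a ↔ α ∈ Ω l (a ∘ σ))
    (H4 : ∀ (l : ℕ) (a : Fin (l + 1) → G), ∀ α ∈ Ω (l + 1) a, ∀ n : ℤ,
      (EE k l α).coeff n ∈ Ω l (a ∘ Fin.succ))
    {r K l : ℕ} (h : l = r + K)
    (DD : Derivation k (RF k l) (RF k l)) (hz : ∀ i, DD (zv i) = 1)
    (hΩ3 : ∀ (a : Fin l → G), ∀ α ∈ Ω l a, DD α ∈ Ω l a)
    (gx : Fin K → Fin l) (hgx : Function.Injective gx) (vx : ∀ i, (gx i : ℕ) = i)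
    (gy : Fin r → Fin l) (hgy : Function.Injective gy) (vy : ∀ s, (gy s : ℕ) = K + s)
    (A : RF k l →+* LaurentSeries (RF k l))
    (hA : ∀ s, A (zv s) = if (s : ℕ) < K then HahnSeries.C (zv s) + HahnSeries.single (-1) 1
      else HahnSeries.C (zv s))
    (hAc : ∀ b : k, A (algebraMap k _ b) = HahnSeries.C (algebraMap k _ b))
    (a : Fin l → G) (α : RF k l) (hα : α ∈ Ω l a) (n : ℤ) :
    (A α).coeff n ∈ TT (embMap gx hgx) (embMap gy hgy) ⊤
      (Ω r (fun s => a (gy s))).toAddSubgroup ∧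
    (A α).coeff n ∈ TT (embMap gx hgx) (embMap gy hgy)
      (Ω K (fun s => a (gx s))).toAddSubgroup ⊤ := by
  have hd : ∀ i s, gx i ≠ gy s := fun i s hh => by
    have := congrArg Fin.val hh
    rw [vx, vy] at this
    omega
  constructor
  · refine lemmaX' Ω hΩPhi hΩ2 H4 h gx hgx gy hgy hd A 1 one_ne_zero ?_ ?_ hAc a α hα n
    · intro i
      rw [hA, if_pos (by rw [vx]; exact i.isLt), map_one (algebraMap k (RF k l)), add_comm]
    · intro s
      rw [hA, if_neg (by rw [vy]; omega)]
  · have hB : ∀ β ∈ Ω l a, ∀ n, (S2 k l K β).coeff n ∈ TT (embMap gx hgx) (embMap gy hgy)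
        (Ω K (fun s => a (gx s))).toAddSubgroup ⊤ := by
      intro β hβ n
      rw [TT_swap]
      refine lemmaX' Ω hΩPhi hΩ2 H4 (by omega) gy hgy gx hgx (fun i s hh => hd s i hh.symm)
        (S2 k l K) (-1) (neg_ne_zero.2 one_ne_zero) ?_ ?_ (S2_c l K) a β hβ n
      · intro s
        rw [S2_zv, if_neg (by rw [vy]; omega), map_neg (algebraMap k (RF k l)), map_one (algebraMap k (RF k l)), HahnSeries.single_neg,
          sub_eq_add_neg, add_comm]
      · intro i
        rw [S2_zv, if_pos (by rw [vx]; exact i.isLt)]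
    have hAB : ∀ i, A (zv i) = S2 k l K (zv i) + HahnSeries.single (-1) 1 := by
      intro i
      rw [hA, S2_zv]
      split_ifs
      · rfl
      · rw [sub_add_cancel]
    obtain ⟨J, hJ⟩ := Tay_Phi DD A (S2 k l K) hz hAB (S2_c l K)
      (fun b => by rw [hAc, S2_c]) α (hΩPhi _ _ _ hα)
    rw [hJ J le_rfl]
    have hsum : (∑ j ∈ Finset.range J, (tu l j : LaurentSeries (RF k l)) *
        S2 k l K (DD^[j] α)).coeff n =
      ∑ j ∈ Finset.range J, ((tu l j : LaurentSeries (RF k l)) * S2 k l K (DD^[j] α)).coeff n :=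
      map_sum (HahnSeries.coeff.addMonoidHom n) _ _
    rw [hsum]
    apply sum_mem
    intro j hjJ
    clear hjJ
    have hj : DD^[j] α ∈ Ω l a := by
      induction j with
      | zero => exact hα
      | succ j ih => rw [Function.iterate_succ_apply']; exact hΩ3 _ _ ih
    have := hB ((j.factorial : k)⁻¹ • DD^[j] α) ((Ω l a).smul_mem _ hj) (n - (-(j : ℤ)))
    rw [Algebra.smul_def, map_mul, S2_c, HahnSeries.C_apply, HahnSeries.coeff_single_mul,
      sub_zero] at this
    unfold tu
    rw [HahnSeries.coeff_single_mul]
    exact this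

end PartFour


section PartFive

variable {k : Type} [Field k]

open TensorProduct in
theorem TT_mem_range {A1 A2 F : Type} [Field A1] [Field A2] [Field F] [Algebra k A1] [Algebra k A2]
    [Algebra k F] (e1 : A1 →ₐ[k] F) (e2 : A2 →ₐ[k] F)
    (A : Submodule k A1) (B : Submodule k A2) (x : F)
    (hx : x ∈ TT (e1 : A1 →+* F) (e2 : A2 →+* F) A.toAddSubgroup B.toAddSubgroup) :
    ∃ t : A ⊗[k] B, Algebra.TensorProduct.productMap e1 e2
      (TensorProduct.map A.subtype B.subtype t) = x := by
  unfold TT at hx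
  induction hx using AddSubgroup.closure_induction with
  | mem x hx =>
    obtain ⟨p, hp, q, hq, rfl⟩ := hx
    exact ⟨(⟨p, hp⟩ : A) ⊗ₜ (⟨q, hq⟩ : B), by simp⟩
  | zero => exact ⟨0, by simp⟩
  | add x y _ _ hx hy =>
    obtain ⟨t, rfl⟩ := hx
    obtain ⟨s, rfl⟩ := hy
    exact ⟨t + s, by simp only [map_add]⟩
  | neg x _ hx =>
    obtain ⟨t, rfl⟩ := hx
    exact ⟨(-1 : k) • t, by rw [map_smul, map_smul, neg_one_smul]⟩

open TensorProduct in
theorem TT_of_range {A1 A2 F : Type} [Field A1] [Field A2] [Field F] [Algebra k A1] [Algebra k A2]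
    [Algebra k F] (e1 : A1 →ₐ[k] F) (e2 : A2 →ₐ[k] F)
    (A : Submodule k A1) (B : Submodule k A2) (t : A ⊗[k] B) :
    Algebra.TensorProduct.productMap e1 e2 (TensorProduct.map A.subtype B.subtype t) ∈
      TT (e1 : A1 →+* F) (e2 : A2 →+* F) A.toAddSubgroup B.toAddSubgroup := by
  induction t using TensorProduct.induction_on with
  | zero => rw [map_zero, map_zero]; exact zero_mem _
  | tmul p q =>
    refine AddSubgroup.subset_closure ⟨p, p.2, q, q.2, ?_⟩
    simp
  | add t s ht hs => simp only [map_add]; exact add_mem ht hs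

open TensorProduct in
theorem TT_inter {A1 A2 F : Type} [Field A1] [Field A2] [Field F] [Algebra k A1] [Algebra k A2]
    [Algebra k F] (e1 : A1 →ₐ[k] F) (e2 : A2 →ₐ[k] F)
    (hinj : ∀ t : A1 ⊗[k] A2, Algebra.TensorProduct.productMap e1 e2 t = 0 → t = 0)
    (A : Submodule k A1) (B : Submodule k A2) (x : F)
    (h1 : x ∈ TT (e1 : A1 →+* F) (e2 : A2 →+* F) A.toAddSubgroup ⊤)
    (h2 : x ∈ TT (e1 : A1 →+* F) (e2 : A2 →+* F) ⊤ B.toAddSubgroup) :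
    x ∈ TT (e1 : A1 →+* F) (e2 : A2 →+* F) A.toAddSubgroup B.toAddSubgroup := by
  obtain ⟨t1, ht1⟩ := TT_mem_range e1 e2 A (⊤ : Submodule k A2) x h1
  obtain ⟨t2, ht2⟩ := TT_mem_range e1 e2 (⊤ : Submodule k A1) B x h2
  obtain ⟨g, hg⟩ := LinearMap.exists_leftInverse_of_injective A.subtype A.ker_subtype
  obtain ⟨g', hg'⟩ := LinearMap.exists_leftInverse_of_injective B.subtype B.ker_subtype
  set t := TensorProduct.map A.subtype (⊤ : Submodule k A2).subtype t1 with ht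
  have e : t = TensorProduct.map (⊤ : Submodule k A1).subtype B.subtype t2 := by
    rw [← sub_eq_zero]
    apply hinj
    rw [map_sub, ht1, ht2, sub_self]
  have hA : TensorProduct.map (A.subtype ∘ₗ g) LinearMap.id t = t := by
    rw [ht, ← LinearMap.comp_apply, ← TensorProduct.map_comp, LinearMap.comp_assoc, hg,
      LinearMap.comp_id, LinearMap.id_comp]
  have hB : TensorProduct.map LinearMap.id (B.subtype ∘ₗ g') t = t := by
    rw [e, ← LinearMap.comp_apply, ← TensorProduct.map_comp, LinearMap.comp_assoc, hg',
      LinearMap.comp_id, LinearMap.id_comp]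
  have h3 : TensorProduct.map (A.subtype ∘ₗ g) (B.subtype ∘ₗ g') =
      TensorProduct.map (A.subtype ∘ₗ g) LinearMap.id ∘ₗ
        TensorProduct.map LinearMap.id (B.subtype ∘ₗ g') := by
    rw [← TensorProduct.map_comp, LinearMap.comp_id, LinearMap.id_comp]
  have hAB : TensorProduct.map A.subtype B.subtype (TensorProduct.map g g' t) = t := by
    calc _ = TensorProduct.map (A.subtype ∘ₗ g) (B.subtype ∘ₗ g') t := by
          rw [TensorProduct.map_comp]; rfl
      _ = t := by rw [h3, LinearMap.comp_apply, hB, hA]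
  rw [← ht1, ← hAB]
  exact TT_of_range e1 e2 A B _

/-- `embMap` as an algebra hom -/
def embA {m l : ℕ} (f : Fin m → Fin l) (hf : Function.Injective f) : RF k m →ₐ[k] RF k l :=
  { embMap (k := k) f hf with commutes' := fun c => embMap_c f hf c }

theorem embA_apply {m l : ℕ} (f : Fin m → Fin l) (hf : Function.Injective f) (x : RF k m) :
    embA f hf x = embMap f hf x := rfl

open TensorProduct in
theorem poly_inj {K r l : ℕ} (gx : Fin K → Fin l) (vx : ∀ i, (gx i : ℕ) = i)
    (gy : Fin r → Fin l) (vy : ∀ s, (gy s : ℕ) = K + s) (hl : l = r + K) :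
    Function.Injective (Algebra.TensorProduct.productMap
      (rename gx : MvPolynomial (Fin K) k →ₐ[k] MvPolynomial (Fin l) k)
      (rename gy : MvPolynomial (Fin r) k →ₐ[k] MvPolynomial (Fin l) k)) := by
  let ret : MvPolynomial (Fin l) k →ₐ[k] MvPolynomial (Fin r) (MvPolynomial (Fin K) k) :=
    MvPolynomial.aeval fun s => if h : (s : ℕ) < K then MvPolynomial.C (MvPolynomial.X ⟨s, h⟩)
      else MvPolynomial.X ⟨s - K, by omega⟩
  have e : ret.comp (Algebra.TensorProduct.productMap
      (rename gx : MvPolynomial (Fin K) k →ₐ[k] MvPolynomial (Fin l) k)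
      (rename gy : MvPolynomial (Fin r) k →ₐ[k] MvPolynomial (Fin l) k)) =
      ((MvPolynomial.algebraTensorAlgEquiv (σ := Fin r) k
        (MvPolynomial (Fin K) k)).restrictScalars k).toAlgHom := by
    apply Algebra.TensorProduct.ext
    · apply MvPolynomial.algHom_ext
      intro i
      simp [ret, vx, MvPolynomial.smul_eq_C_mul]
    · apply MvPolynomial.algHom_ext
      intro i
      simp [ret, vy]
  have h2 : Function.Injective (ret ∘ (Algebra.TensorProduct.productMap
      (rename gx : MvPolynomial (Fin K) k →ₐ[k] MvPolynomial (Fin l) k)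
      (rename gy : MvPolynomial (Fin r) k →ₐ[k] MvPolynomial (Fin l) k))) := by
    rw [← AlgHom.coe_comp, e]
    exact (MvPolynomial.algebraTensorAlgEquiv (σ := Fin r) k (MvPolynomial (Fin K) k)).injective
  exact Function.Injective.of_comp h2

open TensorProduct in
theorem rf_clear {K r : ℕ} (t : RF k K ⊗[k] RF k r) :
    ∃ (a : MvPolynomial (Fin K) k) (b : MvPolynomial (Fin r) k)
      (t0 : MvPolynomial (Fin K) k ⊗[k] MvPolynomial (Fin r) k), a ≠ 0 ∧ b ≠ 0 ∧
      (algebraMap _ (RF k K) a ⊗ₜ[k] algebraMap _ (RF k r) b) * t =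
        Algebra.TensorProduct.map (IsScalarTower.toAlgHom k (MvPolynomial (Fin K) k) (RF k K))
          (IsScalarTower.toAlgHom k (MvPolynomial (Fin r) k) (RF k r)) t0 := by
  induction t using TensorProduct.induction_on with
  | zero => exact ⟨1, 1, 0, one_ne_zero, one_ne_zero, by rw [mul_zero, map_zero]⟩
  | tmul x y =>
    obtain ⟨p, a, ha, rfl⟩ := IsFractionRing.div_surjective (A := MvPolynomial (Fin K) k) x
    obtain ⟨q, b, hb, rfl⟩ := IsFractionRing.div_surjective (A := MvPolynomial (Fin r) k) y
    have ha' := nonZeroDivisors.ne_zero ha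
    have hb' := nonZeroDivisors.ne_zero hb
    refine ⟨a, b, p ⊗ₜ q, ha', hb', ?_⟩
    rw [Algebra.TensorProduct.tmul_mul_tmul, mul_div_cancel₀, mul_div_cancel₀,
      Algebra.TensorProduct.map_tmul]
    · rfl
    · rwa [Ne, map_eq_zero_iff _ (IsFractionRing.injective (MvPolynomial (Fin r) k) (RF k r))]
    · rwa [Ne, map_eq_zero_iff _ (IsFractionRing.injective (MvPolynomial (Fin K) k) (RF k K))]
  | add t s ht hs =>
    obtain ⟨a, b, t0, ha, hb, h1⟩ := ht
    obtain ⟨a', b', s0, ha', hb', h2⟩ := hs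
    refine ⟨a * a', b * b', (a' ⊗ₜ b') * t0 + (a ⊗ₜ b) * s0, mul_ne_zero ha ha',
      mul_ne_zero hb hb', ?_⟩
    rw [map_add, map_mul (Algebra.TensorProduct.map _ _), map_mul (Algebra.TensorProduct.map _ _),
      ← h1, ← h2, Algebra.TensorProduct.map_tmul,
      Algebra.TensorProduct.map_tmul, map_mul, map_mul, ← Algebra.TensorProduct.tmul_mul_tmul]
    simp only [IsScalarTower.coe_toAlgHom']
    ring

open TensorProduct in
theorem rf_inj {K r l : ℕ} (gx : Fin K → Fin l) (hgx : Function.Injective gx)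
    (vx : ∀ i, (gx i : ℕ) = i)
    (gy : Fin r → Fin l) (hgy : Function.Injective gy) (vy : ∀ s, (gy s : ℕ) = K + s)
    (hl : l = r + K) (t : RF k K ⊗[k] RF k r)
    (ht : Algebra.TensorProduct.productMap (embA (k := k) gx hgx) (embA gy hgy) t = 0) : t = 0 := by
  obtain ⟨a, b, t0, ha, hb, h⟩ := rf_clear t
  have h1 := congrArg (Algebra.TensorProduct.productMap (embA (k := k) gx hgx) (embA gy hgy)) h
  rw [map_mul, ht, mul_zero, ← AlgHom.comp_apply] at h1
  have e : (Algebra.TensorProduct.productMap (embA (k := k) gx hgx) (embA gy hgy)).comp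
      (Algebra.TensorProduct.map (IsScalarTower.toAlgHom k (MvPolynomial (Fin K) k) (RF k K))
          (IsScalarTower.toAlgHom k (MvPolynomial (Fin r) k) (RF k r))) =
      (IsScalarTower.toAlgHom k (MvPolynomial (Fin l) k) (RF k l)).comp
        (Algebra.TensorProduct.productMap (rename gx) (rename gy)) := by
    apply Algebra.TensorProduct.ext
    · ext1 i
      simp [embA_apply, embMap_poly]
    · ext1 i
      simp [embA_apply, embMap_poly]
  rw [e, AlgHom.comp_apply, IsScalarTower.coe_toAlgHom'] at h1
  have h2 := (map_eq_zero_iff _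
    (IsFractionRing.injective (MvPolynomial (Fin l) k) (RF k l))).1 h1.symm
  have h3 := (map_eq_zero_iff _ (poly_inj gx vx gy vy hl)).1 h2
  rw [h3, map_zero] at h
  have ha' : algebraMap _ (RF k K) a ≠ 0 := by
    rwa [Ne, map_eq_zero_iff _ (IsFractionRing.injective (MvPolynomial (Fin K) k) (RF k K))]
  have hb' : algebraMap _ (RF k r) b ≠ 0 := by
    rwa [Ne, map_eq_zero_iff _ (IsFractionRing.injective (MvPolynomial (Fin r) k) (RF k r))]
  have h4 := congrArg (fun z => ((algebraMap _ (RF k K) a)⁻¹ ⊗ₜ[k] (algebraMap _ (RF k r) b)⁻¹) * z) h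
  simp only [mul_zero] at h4
  rw [← mul_assoc, Algebra.TensorProduct.tmul_mul_tmul, inv_mul_cancel₀ ha', inv_mul_cancel₀ hb',
    ← Algebra.TensorProduct.one_def, one_mul] at h4
  exact h4

theorem TT_fin {A1 A2 F : Type} [Field A1] [Field A2] [Field F] (e1 : A1 →+* F) (e2 : A2 →+* F)
    (A : AddSubgroup A1) (B : AddSubgroup A2) (x : F) (hx : x ∈ TT e1 e2 A B) :
    ∃ (N : ℕ) (p : Fin N → A1) (q : Fin N → A2), (∀ i, p i ∈ A) ∧ (∀ i, q i ∈ B) ∧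
      x = ∑ i, e1 (p i) * e2 (q i) := by
  unfold TT at hx
  induction hx using AddSubgroup.closure_induction with
  | mem x hx =>
    obtain ⟨p, hp, q, hq, rfl⟩ := hx
    exact ⟨1, fun _ => p, fun _ => q, fun _ => hp, fun _ => hq, by simp⟩
  | zero => exact ⟨0, fun _ => 0, fun _ => 0, fun _ => zero_mem _, fun _ => zero_mem _, by simp⟩
  | add x y _ _ hx hy =>
    obtain ⟨N, p, q, hp, hq, rfl⟩ := hx
    obtain ⟨N', p', q', hp', hq', rfl⟩ := hy
    refine ⟨N + N', Fin.append p p', Fin.append q q', ?_, ?_, ?_⟩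
    · intro i; induction i using Fin.addCases <;> simp [hp, hp']
    · intro i; induction i using Fin.addCases <;> simp [hq, hq']
    · rw [Fin.sum_univ_add]; simp
  | neg x _ hx =>
    obtain ⟨N, p, q, hp, hq, rfl⟩ := hx
    exact ⟨N, fun i => -p i, q, fun i => neg_mem (hp i), hq, by simp⟩

end PartFive


section PartSix

variable {k : Type} [Field k]

open TensorProduct in
theorem inter_gen {A1 A2 F : Type} [Field A1] [Field A2] [Field F] [Algebra k A1] [Algebra k A2]
    [Algebra k F] (e1 : A1 →ₐ[k] F) (e2 : A2 →ₐ[k] F)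
    (hinj : ∀ t : A1 ⊗[k] A2, Algebra.TensorProduct.productMap e1 e2 t = 0 → t = 0)
    (f1 : A1 →+* F) (f2 : A2 →+* F) (hf1 : ∀ x, e1 x = f1 x) (hf2 : ∀ x, e2 x = f2 x)
    (A : Submodule k A1) (B : Submodule k A2) (x : F)
    (h1 : x ∈ TT f1 f2 ⊤ B.toAddSubgroup)
    (h2 : x ∈ TT f1 f2 A.toAddSubgroup ⊤) :
    ∃ (N : ℕ) (p : Fin N → A1) (q : Fin N → A2), (∀ i, p i ∈ A) ∧ (∀ i, q i ∈ B) ∧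
      x = ∑ i, f1 (p i) * f2 (q i) := by
  have g1 : (e1 : A1 →+* F) = f1 := RingHom.ext hf1
  have g2 : (e2 : A2 →+* F) = f2 := RingHom.ext hf2
  subst g1
  subst g2
  have h3 := TT_inter e1 e2 hinj A B x h2 h1
  obtain ⟨N, p, q, hp, hq, hx⟩ := TT_fin _ _ _ _ x h3
  exact ⟨N, p, q, hp, hq, hx⟩

theorem inter_fin {K r l : ℕ} (gx : Fin K → Fin l) (hgx : Function.Injective gx)
    (vx : ∀ i, (gx i : ℕ) = i)
    (gy : Fin r → Fin l) (hgy : Function.Injective gy) (vy : ∀ s, (gy s : ℕ) = K + s)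
    (hl : l = r + K) (A : Submodule k (RF k K)) (B : Submodule k (RF k r)) (x : RF k l)
    (h1 : x ∈ TT (embMap gx hgx) (embMap gy hgy) ⊤ B.toAddSubgroup)
    (h2 : x ∈ TT (embMap gx hgx) (embMap gy hgy) A.toAddSubgroup ⊤) :
    ∃ (N : ℕ) (p : Fin N → RF k K) (q : Fin N → RF k r), (∀ i, p i ∈ A) ∧ (∀ i, q i ∈ B) ∧
      x = ∑ i, embMap gx hgx (p i) * embMap gy hgy (q i) := by
  have hinj := rf_inj (k := k) gx hgx vx gy hgy vy hl
  have hh := inter_gen (embA (k := k) gx hgx) (embA (k := k) gy hgy)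
  exact hh hinj (embMap gx hgx) (embMap gy hgy) (fun x => embA_apply gx hgx x)
    (fun x => embA_apply gy hgy x) A B x h1 h2

end PartSix


end AllParts

set_option synthInstance.maxHeartbeats 1000000
set_option maxHeartbeats 2000000

/-- assume given `deg : G → ℤ`, a symmetric `loc : G × G → ℤ`, and
for every finite tuple `a` of elements of `G` a subspace `Ω^a ⊆ Φ^l` satisfying
(Ω0)–(Ω4).  Then for every `1 ≤ K ≤ l` and `α ∈ Ω^{(a₁,…,a_l)}`, the expansion of
`α(z₁+z,…,z_K+z, z_{K+1},…,z_l)` at `z = ∞` has the form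
`Σ_{n≥n₀} z^{-n-1} Σᵢ α'_{ni}(z₁,…,z_K)·α''_{ni}(z_{K+1},…,z_l)` with finitely many
terms for each `n`, where `α'_{ni} ∈ Ω^{(a₁,…,a_K)}` and
`α''_{ni} ∈ Ω^{(a_{K+1},…,a_l)}`.  Here `E l` is the substitution `z₁ ↦ z⁻¹`
(expansion at `z₁ = ∞`) used to state (Ω4), and `SH l K` is the substitution
`z_s ↦ z_s + z⁻¹` for `s ≤ K` (expansion of the shifted function at `z = ∞`). -/
theorem statement18 {k : Type} [Field k] [CharZero k]
    (G : Type) (degG : G → ℤ) (locG : G → G → ℤ)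
    (hloc : ∀ a b, locG a b = locG b a)
    (D : ∀ l : ℕ, Fin l → Derivation k (RF k l) (RF k l))
    (hD : ∀ l, IsPartialDeriv (D l))
    (Ω : ∀ l : ℕ, (Fin l → G) → Submodule k (RF k l))
    (hΩPhi : ∀ (l : ℕ) (a : Fin l → G), ∀ α ∈ Ω l a, α ∈ Phi k l)
    -- (Ω0)
    (hΩ00 : ∀ a : Fin 0 → G, Ω 0 a = ⊤)
    (hΩ01 : ∀ a : Fin 1 → G,
      Ω 1 a = Subalgebra.toSubmodule (Algebra.adjoin k {zv (0 : Fin 1)}))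
    -- (Ω1)
    (hΩ1 : ∀ (l : ℕ) (a : Fin l → G), ∀ α ∈ Ω l a, ∀ i j : Fin l, i < j →
      ∀ m : ℤ, m < -(locG (a i) (a j)) → rho i j m α = 0)
    -- (Ω2)
    (hΩ2 : ∀ (l : ℕ) (a : Fin l → G) (σ : Equiv.Perm (Fin l)) (α : RF k l),
      permHom σ α ∈ Ω l a ↔ α ∈ Ω l (a ∘ σ))
    -- (Ω3)
    (hΩ3 : ∀ (l : ℕ) (a : Fin l → G), ∀ α ∈ Ω l a,
      Delta (D l) α ∈ Ω l a ∧
      DeltaStar (D l) (fun i => 2 * degG (a i)) α ∈ Ω l a)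
    -- the substitution `z₁ ↦ z⁻¹`, giving the expansion at `z₁ = ∞`
    (E : ∀ l : ℕ, RF k (l + 1) →+* RatFunc (RF k (l + 1)))
    (hE0 : ∀ l : ℕ, (E l) (zv (0 : Fin (l + 1))) = (RatFunc.X : RatFunc (RF k (l + 1)))⁻¹)
    (hE1 : ∀ (l : ℕ) (s : Fin l), (E l) (zv s.succ) = RatFunc.C (zv (k := k) s.succ))
    (hEc : ∀ (l : ℕ) (c : k),
      (E l) (algebraMap k (RF k (l + 1)) c) = RatFunc.C (algebraMap k (RF k (l + 1)) c))
    -- (Ω4)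
    (hΩ4 : ∀ (l : ℕ) (a : Fin (l + 1) → G), ∀ α ∈ Ω (l + 1) a, ∀ n : ℤ,
      ∃ β ∈ Ω l (a ∘ Fin.succ),
        lcoeff (n + 1) (E l α) = embMap Fin.succ (Fin.succ_injective l) β)
    -- the substitution `z_s ↦ z_s + z⁻¹` for `s < K`
    (SH : ∀ l K : ℕ, RF k l →+* RatFunc (RF k l))
    (hSH : ∀ (l K : ℕ) (s : Fin l), (SH l K) (zv s) =
      if (s : ℕ) < K then RatFunc.C (zv (k := k) s) + (RatFunc.X : RatFunc (RF k l))⁻¹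
      else RatFunc.C (zv (k := k) s))
    (hSHc : ∀ (l K : ℕ) (c : k),
      (SH l K) (algebraMap k (RF k l) c) = RatFunc.C (algebraMap k (RF k l) c)) :
    -- conclusion (Ω5)
    ∀ (l : ℕ) (a : Fin l → G) (K : ℕ) (hK1 : 1 ≤ K) (hK : K ≤ l), ∀ α ∈ Ω l a,
      (∃ n₀ : ℤ, ∀ n : ℤ, n < n₀ → lcoeff (n + 1) (SH l K α) = 0) ∧
      ∀ n : ℤ, ∃ (N : ℕ) (p : Fin N → RF k K) (q : Fin N → RF k (l - K)),
        (∀ i, p i ∈ Ω K (fun s => a (Fin.castLE hK s))) ∧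
        (∀ i, q i ∈ Ω (l - K)
          (fun s => a ⟨K + (s : ℕ), by have := s.isLt; omega⟩)) ∧
        lcoeff (n + 1) (SH l K α) =
          ∑ i, embMap (Fin.castLE hK) (Fin.castLE_injective hK) (p i) *
            embMap (fun s : Fin (l - K) =>
                (⟨K + (s : ℕ), by have := s.isLt; omega⟩ : Fin l))
              (fun s t hst => by
                have h : K + (s : ℕ) = K + (t : ℕ) := congrArg Fin.val hst
                exact Fin.ext (by omega)) (q i) := by
  intro l a K hK1 hK α hα
  have H4 : ∀ (l : ℕ) (a : Fin (l + 1) → G), ∀ α ∈ Ω (l + 1) a, ∀ n : ℤ,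
      (EE k l α).coeff n ∈ Ω l (a ∘ Fin.succ) := by
    intro l a α hα n
    obtain ⟨β, hβ, h⟩ := hΩ4 l a α hα (n - 1)
    rw [sub_add_cancel, E_eq l (E l) (hE0 l) (hE1 l) (hEc l)] at h
    have := (embMap (k := k) Fin.succ (Fin.succ_injective l)).injective h
    rw [this]
    exact hβ
  have hDD : ∀ x, (∑ i, D l i : Derivation k (RF k l) (RF k l)) x = Delta (D l) x := by
    intro x
    unfold Delta
    rw [← Derivation.coeFnAddMonoidHom_apply, map_sum, Finset.sum_apply]
    rfl
  have hz : ∀ i, (∑ i, D l i : Derivation k (RF k l) (RF k l)) (zv i) = 1 := by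
    intro i
    rw [hDD]
    unfold Delta
    simp only [hD l _ i]
    simp
  have hA : ∀ s, ((coeL (RF k l)).comp (SH l K)) (zv s) =
      if (s : ℕ) < K then HahnSeries.C (zv s) + HahnSeries.single (-1) 1
      else HahnSeries.C (zv s) := by
    intro s
    rw [RingHom.comp_apply, hSH]
    split_ifs
    · rw [map_add, coeL_C, coeL_Xinv]
    · rw [coeL_C]
  have hAc : ∀ b : k, ((coeL (RF k l)).comp (SH l K)) (algebraMap k _ b) =
      HahnSeries.C (algebraMap k _ b) := by
    intro b
    rw [RingHom.comp_apply, hSHc, coeL_C]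
  refine ⟨⟨(coeL (RF k l) (SH l K α)).order - 1, fun n hn => ?_⟩, fun n => ?_⟩
  · exact HahnSeries.coeff_eq_zero_of_lt_order (x := coeL (RF k l) (SH l K α)) (by omega)
  · have hl : l = (l - K) + K := by omega
    have hgy : Function.Injective (fun s : Fin (l - K) =>
        (⟨K + (s : ℕ), by have := s.isLt; omega⟩ : Fin l)) := fun s t hst => by
      have h : K + (s : ℕ) = K + (t : ℕ) := congrArg Fin.val hst
      exact Fin.ext (by omega)
    obtain ⟨h1, h2⟩ := coreAB Ω hΩPhi hΩ2 H4 hl (∑ i, D l i) hz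
      (fun a α hα => by rw [hDD]; exact (hΩ3 l a α hα).1)
      (Fin.castLE hK) (Fin.castLE_injective hK) (fun i => rfl)
      (fun s : Fin (l - K) => (⟨K + (s : ℕ), by have := s.isLt; omega⟩ : Fin l))
      hgy (fun s => rfl) ((coeL (RF k l)).comp (SH l K)) hA hAc a α hα (n + 1)
    exact inter_fin (Fin.castLE hK) (Fin.castLE_injective hK) (fun i => rfl) _ hgy
      (fun s => rfl) hl _ _ _ h1 h2

end Griess
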